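/- arXiv:2505.06174 — 9 statements merged into one kernel-verified Lean document; each statement's English description precedes it below -/
import Mathlib

section
/- For any δ > 0 and any 0 < ρ < 1, every regular coding scheme Enc : F^k × F^σ → F^n, Dec : F^n → F^k ∪ {⊥} over a finite field F with q elements that is a strong (0,δ)-AMD code is also a strong (ρ, q^{ρn}·δ)-AMD code. -/
open scoped Classical BigOperators

/-- Probability of an event `E` under a finitely supported probability mass function `p`. -/
noncomputable def pr {Ω : Type*} [Fintype Ω] (p : Ω → ℝ) (E : Ω → Prop) : ℝ :=
  ∑ ω : Ω, if E ω then p ω else 0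

/-- Min-entropy `H∞(X) = -log₂ max_x Pr[X = x]`. -/
noncomputable def minEntropy {Ω α : Type*} [Fintype Ω] [Fintype α]
    (p : Ω → ℝ) (X : Ω → α) : ℝ :=
  - Real.logb 2 (⨆ x : α, pr p (fun ω => X ω = x))

/-- Conditional (average) min-entropy
`H̃∞(X|Z) = -log₂ Σ_z Pr[Z=z] · max_x Pr[X=x | Z=z] = -log₂ Σ_z max_x Pr[X=x ∧ Z=z]`. -/
noncomputable def condMinEntropy {Ω α β : Type*} [Fintype Ω] [Fintype α] [Fintype β]
    (p : Ω → ℝ) (X : Ω → α) (Z : Ω → β) : ℝ :=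
  - Real.logb 2 (∑ z : β, ⨆ x : α, pr p (fun ω => X ω = x ∧ Z ω = z))

/-- `(Enc, Dec)` (with message type `Msg`, randomness type `Rnd`, codeword type `C`,
codeword length `n` over an alphabet of size `q`) is a strong `(ρ, δ)`-AMD code:
for every message `m`, every probability space, every uniform randomness `R`, every
leakage `Z` (jointly distributed with `R`) satisfying
`H̃∞(Enc(m,R) | Z) ≥ H∞(Enc(m,R)) − ρ·n·log₂ q`, and every randomized adversary
`A` whose internal random seed `W` is independent of `(R, Z)`,
`Pr[Dec(Enc(m,R) + A(Z)) ∉ {m, ⊥}] ≤ δ`. -/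
def IsStrongAMD {Msg Rnd C : Type*} [Fintype Rnd] [Fintype C] [Add C]
    (Enc : Msg × Rnd → C) (Dec : C → Option Msg) (n q : ℕ) (ρ δ : ℝ) : Prop :=
  ∀ (m : Msg) (Ω : Type) [Fintype Ω] (p : Ω → ℝ),
    (∀ ω, 0 ≤ p ω) → (∑ ω : Ω, p ω) = 1 →
    ∀ (R : Ω → Rnd),
      (∀ r : Rnd, pr p (fun ω => R ω = r) = 1 / (Fintype.card Rnd : ℝ)) →
      ∀ (ZS : Type) [Fintype ZS] (Z : Ω → ZS) (T : Type) [Fintype T] (W : Ω → T),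
        (∀ (r : Rnd) (z : ZS) (w : T),
          pr p (fun ω => (R ω = r ∧ Z ω = z) ∧ W ω = w)
            = pr p (fun ω => R ω = r ∧ Z ω = z) * pr p (fun ω => W ω = w)) →
        condMinEntropy p (fun ω => Enc (m, R ω)) Z
          ≥ minEntropy p (fun ω => Enc (m, R ω)) - ρ * n * Real.logb 2 q →
        ∀ (A : ZS → T → C),
          pr p (fun ω => Dec (Enc (m, R ω) + A (Z ω) (W ω))
              ∉ ({some m, none} : Set (Option Msg))) ≤ δ

theorem pr_mono_aux {Ω : Type*} [Fintype Ω] (p : Ω → ℝ) (hp : ∀ ω, 0 ≤ p ω) (E G : Ω → Prop)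
    (h : ∀ ω, E ω → G ω) : pr p E ≤ pr p G := by
  unfold pr
  apply Finset.sum_le_sum
  intro ω _
  by_cases h1 : E ω
  · simp [h1, h ω h1]
  · simp only [h1, if_false]
    split_ifs
    · exact hp ω
    · exact le_rfl

theorem pr_fiber_aux {Ω α : Type*} [Fintype Ω] [Fintype α] (p : Ω → ℝ) (X : Ω → α)
    (E : α → Prop) :
    pr p (fun ω => E (X ω)) = ∑ x : α, if E x then pr p (fun ω => X ω = x) else 0 := by
  unfold pr
  have : ∀ x : α, (if E x then ∑ ω : Ω, (if X ω = x then p ω else 0) else 0)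
      = ∑ ω : Ω, if X ω = x then (if E x then p ω else 0) else 0 := by
    intro x
    by_cases h : E x <;> simp [h]
  rw [Finset.sum_congr rfl (fun x _ => this x), Finset.sum_comm]
  apply Finset.sum_congr rfl
  intro ω _
  rw [Finset.sum_ite_eq]
  simp

/-- every regular coding scheme that is a strong `(0, δ)`-AMD code
(equivalently: every fixed offset succeeds with probability at most `δ` over uniform
randomness) is also a strong `(ρ, q^{ρn}·δ)`-AMD code. -/
theorem stmt4 {F : Type*} [Field F] [Fintype F] (k σn n : ℕ)
    (δ ρ : ℝ) (hδ : 0 < δ) (hρ0 : 0 < ρ) (hρ1 : ρ < 1)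
    (Enc : (Fin k → F) × (Fin σn → F) → (Fin n → F))
    (Dec : (Fin n → F) → Option (Fin k → F))
    (hcode : ∀ m r, Dec (Enc (m, r)) = some m)
    (hreg : Function.Injective Enc)
    (h0 : ∀ (m : Fin k → F) (a : Fin n → F),
      ((Finset.univ.filter (fun r : Fin σn → F =>
          Dec (Enc (m, r) + a) ∉ ({some m, none} : Set (Option (Fin k → F))))).card : ℝ)
        / (Fintype.card F : ℝ) ^ σn ≤ δ) :
    IsStrongAMD Enc Dec n (Fintype.card F)
      ρ ((Fintype.card F : ℝ) ^ (ρ * n) * δ) := by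
  intro m Ω _ p hp hp1 R hR ZS _ Z T _ W hind hent A
  set q : ℝ := (Fintype.card F : ℝ) with hq
  have hq0 : 0 < q := by
    rw [hq]; exact_mod_cast Fintype.card_pos
  have hcard : (Fintype.card (Fin σn → F) : ℝ) = q ^ σn := by simp [hq]
  have hQ : 0 < q ^ σn := pow_pos hq0 _
  set M : ZS → ℝ := fun z => ⨆ x : Fin n → F, pr p (fun ω => Enc (m, R ω) = x ∧ Z ω = z) with hM
  have hMle : ∀ r z, pr p (fun ω => R ω = r ∧ Z ω = z) ≤ M z := by
    intro r z
    refine le_trans ?_ (le_ciSup (f := fun x : Fin n → F =>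
      pr p (fun ω => Enc (m, R ω) = x ∧ Z ω = z)) (Set.finite_range _).bddAbove (Enc (m, r)))
    apply pr_mono_aux p hp
    rintro ω ⟨h1, h2⟩
    exact ⟨by rw [h1], h2⟩
  have hpr0 : ∀ E : Ω → Prop, 0 ≤ pr p E := by
    intro E
    apply Finset.sum_nonneg
    intro ω _
    split_ifs
    · exact hp ω
    · exact le_rfl
  have hM0 : ∀ z, 0 ≤ M z := fun z => (hpr0 _).trans (hMle 0 z)
  have hW : ∑ w : T, pr p (fun ω => W ω = w) = 1 := by
    have := pr_fiber_aux p W (fun _ => True)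
    simp only [if_true] at this
    rw [← this]
    simpa [pr] using hp1
  -- the max probability
  have hmax : (⨆ x : Fin n → F, pr p (fun ω => Enc (m, R ω) = x)) = (q ^ σn)⁻¹ := by
    have hinj : ∀ r, pr p (fun ω => Enc (m, R ω) = Enc (m, r)) = (q ^ σn)⁻¹ := by
      intro r
      have h1 := hR r
      rw [hcard, one_div] at h1
      rw [← h1]
      congr 1
      funext ω
      apply propext
      constructor
      · intro h
        exact (Prod.mk.inj (hreg h)).2
      · intro h
        rw [h]
    apply le_antisymm
    · apply ciSup_le
      intro x
      by_cases hx : ∃ r, Enc (m, r) = x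
      · obtain ⟨r, rfl⟩ := hx
        exact (hinj r).le
      · have : pr p (fun ω => Enc (m, R ω) = x) = 0 := by
          apply Finset.sum_eq_zero
          intro ω _
          rw [if_neg]
          exact fun h => hx ⟨_, h⟩
        rw [this]
        positivity
    · rw [← hinj 0]
      exact le_ciSup (f := fun x : Fin n → F =>
        pr p (fun ω => Enc (m, R ω) = x)) (Set.finite_range _).bddAbove (Enc (m, 0))
  have hmain : pr p (fun ω => Dec (Enc (m, R ω) + A (Z ω) (W ω))
      ∉ ({some m, none} : Set (Option (Fin k → F)))) ≤ δ * q ^ σn * ∑ z, M z := by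
    have h1 := pr_fiber_aux p (fun ω => (Z ω, W ω, R ω))
      (fun x => Dec (Enc (m, x.2.2) + A x.1 x.2.1) ∉ ({some m, none} : Set (Option (Fin k → F))))
    refine h1.le.trans ?_
    rw [Fintype.sum_prod_type, Finset.mul_sum]
    apply Finset.sum_le_sum
    intro z _
    rw [Fintype.sum_prod_type]
    have h2 : δ * q ^ σn * M z = ∑ w : T, pr p (fun ω => W ω = w) * (δ * q ^ σn * M z) := by
      rw [← Finset.sum_mul, hW, one_mul]
    rw [h2]
    apply Finset.sum_le_sum
    intro w _
    have h3 := h0 m (A z w)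
    rw [div_le_iff₀ hQ] at h3
    calc _ ≤ ∑ r : Fin σn → F, (if Dec (Enc (m, r) + A z w) ∉
              ({some m, none} : Set (Option (Fin k → F)))
            then pr p (fun ω => W ω = w) * M z else 0) := by
          apply Finset.sum_le_sum
          intro r _
          dsimp only
          split_ifs
          · exact le_rfl
          · have h4 : pr p (fun ω => (Z ω, W ω, R ω) = (z, w, r))
                = pr p (fun ω => (R ω = r ∧ Z ω = z) ∧ W ω = w) := by
              congr 1
              funext ω
              simp only [Prod.mk.injEq, eq_iff_iff]
              tauto
            rw [h4, hind, mul_comm]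
            exact mul_le_mul_of_nonneg_left (hMle r z) (hpr0 _)
      _ = ((Finset.univ.filter (fun r : Fin σn → F => Dec (Enc (m, r) + A z w) ∉
              ({some m, none} : Set (Option (Fin k → F))))).card : ℝ)
            * (pr p (fun ω => W ω = w) * M z) := by
          rw [← Finset.sum_filter, Finset.sum_const, nsmul_eq_mul]
      _ ≤ (δ * q ^ σn) * (pr p (fun ω => W ω = w) * M z) :=
          mul_le_mul_of_nonneg_right h3 (mul_nonneg (hpr0 _) (hM0 z))
      _ = _ := by ring
  have hS : ∑ z, M z ≤ q ^ (ρ * n) * (q ^ σn)⁻¹ := by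
    have hpos : 0 < q ^ (ρ * n) := Real.rpow_pos_of_pos hq0 _
    rcases (Finset.sum_nonneg (fun z _ => hM0 z) : 0 ≤ ∑ z, M z).eq_or_lt with h | h
    · rw [← h]; positivity
    · unfold condMinEntropy minEntropy at hent
      rw [hmax] at hent
      have hl : Real.logb 2 (q ^ (ρ * n) * (q ^ σn)⁻¹)
          = ρ * n * Real.logb 2 q + Real.logb 2 ((q ^ σn)⁻¹) := by
        rw [Real.logb_mul hpos.ne' (inv_pos.mpr hQ).ne', Real.logb_rpow_eq_mul_logb_of_pos hq0]
      rw [← Real.logb_le_logb (b := 2) (by norm_num) h (by positivity), hl]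
      change -Real.logb 2 (∑ z, M z) ≥ _ at hent
      linarith
  calc _ ≤ _ := hmain
    _ ≤ δ * q ^ σn * (q ^ (ρ * n) * (q ^ σn)⁻¹) :=
        mul_le_mul_of_nonneg_left hS (by positivity)
    _ = _ := by field_simp
end

section
/- For any δ > 0 and any 0 < ρ < 1, every injective deterministic coding scheme Enc : F^k → F^n, Dec : F^n → F^k ∪ {⊥} over a finite field F with q elements that is a weak (0,δ)-AMD code is also a weak (ρ, q^{ρn}·δ)-AMD code. -/
open scoped Classical BigOperators

/-- A deterministic coding scheme `(Enc, Dec)` (codeword length `n` over an alphabet of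
size `q`) is a weak `(ρ, δ)`-AMD code: for every probability space, every uniform
message `M`, every leakage `Z` (jointly distributed with `M`) satisfying
`H̃∞(Enc(M) | Z) ≥ H∞(Enc(M)) − ρ·n·log₂ q`, and every function `A : 𝒵 → C`,
`Pr[Dec(Enc(M) + A(Z)) ∉ {M, ⊥}] ≤ δ`. -/
def IsWeakAMD {Msg C : Type*} [Fintype Msg] [Fintype C] [Add C]
    (Enc : Msg → C) (Dec : C → Option Msg) (n q : ℕ) (ρ δ : ℝ) : Prop :=
  ∀ (Ω : Type) [Fintype Ω] (p : Ω → ℝ),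
    (∀ ω, 0 ≤ p ω) → (∑ ω : Ω, p ω) = 1 →
    ∀ (M : Ω → Msg),
      (∀ m : Msg, pr p (fun ω => M ω = m) = 1 / (Fintype.card Msg : ℝ)) →
      ∀ (ZS : Type) [Fintype ZS] (Z : Ω → ZS),
        condMinEntropy p (fun ω => Enc (M ω)) Z
          ≥ minEntropy p (fun ω => Enc (M ω)) - ρ * n * Real.logb 2 q →
        ∀ (A : ZS → C),
          pr p (fun ω => Dec (Enc (M ω) + A (Z ω))
              ∉ ({some (M ω), none} : Set (Option Msg))) ≤ δ

/-- every injective deterministic coding scheme that is a weak `(0, δ)`-AMD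
code (equivalently: every fixed offset succeeds with probability at most `δ` over a
uniform message) is also a weak `(ρ, q^{ρn}·δ)`-AMD code. -/
theorem stmt5 {F : Type*} [Field F] [Fintype F] (k n : ℕ)
    (δ ρ : ℝ) (hδ : 0 < δ) (hρ0 : 0 < ρ) (hρ1 : ρ < 1)
    (Enc : (Fin k → F) → (Fin n → F))
    (Dec : (Fin n → F) → Option (Fin k → F))
    (hcode : ∀ m, Dec (Enc m) = some m)
    (hreg : Function.Injective Enc)
    (h0 : ∀ a : Fin n → F,
      ((Finset.univ.filter (fun m : Fin k → F =>
          Dec (Enc m + a) ∉ ({some m, none} : Set (Option (Fin k → F))))).card : ℝ)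
        / (Fintype.card F : ℝ) ^ k ≤ δ) :
    IsWeakAMD Enc Dec n (Fintype.card F)
      ρ ((Fintype.card F : ℝ) ^ (ρ * n) * δ) := by
  intro Ω _ p hp hp1 M hM ZS _ Z hH A
  unfold condMinEntropy minEntropy at hH
  have hq : (0 : ℝ) < (Fintype.card F : ℝ) := by exact_mod_cast Fintype.card_pos
  have hqk : (0 : ℝ) < (Fintype.card F : ℝ) ^ k := pow_pos hq k
  have hcard : (Fintype.card (Fin k → F) : ℝ) = (Fintype.card F : ℝ) ^ k := by
    simp
  have hprnn : ∀ E : Ω → Prop, 0 ≤ pr p E := fun E =>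
    Finset.sum_nonneg fun ω _ => by split_ifs <;> simp [hp]
  have hprm : ∀ m, pr p (fun ω => Enc (M ω) = Enc m) = 1 / (Fintype.card F : ℝ) ^ k := by
    intro m
    rw [← hcard, ← hM m]
    simp only [hreg.eq_iff]
  have hP0 : (⨆ x, pr p (fun ω => Enc (M ω) = x)) = 1 / (Fintype.card F : ℝ) ^ k := by
    apply le_antisymm
    · apply ciSup_le
      intro x
      by_cases hx : ∃ m, Enc m = x
      · obtain ⟨m, rfl⟩ := hx
        exact (hprm m).le
      · have : pr p (fun ω => Enc (M ω) = x) = 0 := by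
          unfold pr
          apply Finset.sum_eq_zero
          intro ω _
          rw [if_neg]
          exact fun h => hx ⟨_, h⟩
        rw [this]
        positivity
    · rw [← hprm 0]
      exact le_ciSup (f := fun x => pr p (fun ω => Enc (M ω) = x)) (Set.finite_range _).bddAbove (Enc 0)
  rw [hP0] at hH
  set s : ZS → ℝ := fun z => ⨆ x, pr p (fun ω => Enc (M ω) = x ∧ Z ω = z) with hs
  have hsx : ∀ z x, pr p (fun ω => Enc (M ω) = x ∧ Z ω = z) ≤ s z := fun z x =>
    le_ciSup (f := fun x => pr p (fun ω => Enc (M ω) = x ∧ Z ω = z))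
      (Set.finite_range _).bddAbove x
  have hs0 : ∀ z, 0 ≤ s z := fun z => (hprnn _).trans (hsx z 0)
  have hS0 : 0 ≤ ∑ z, s z := Finset.sum_nonneg fun z _ => hs0 z
  let bad : (Fin k → F) → ZS → Prop := fun m z =>
    Dec (Enc m + A z) ∉ ({some m, none} : Set (Option (Fin k → F)))
  have hS : ∑ z, s z ≤ (Fintype.card F : ℝ) ^ (ρ * n) * (1 / (Fintype.card F : ℝ) ^ k) := by
    rcases hS0.eq_or_lt with h | h
    · rw [← h]; positivity
    · have h1 : Real.logb 2 (∑ z, s z) ≤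
          Real.logb 2 ((Fintype.card F : ℝ) ^ (ρ * n) * (1 / (Fintype.card F : ℝ) ^ k)) := by
        rw [Real.logb_mul (by positivity) (by positivity), Real.logb_rpow_eq_mul_logb_of_pos hq]
        linarith
      exact (Real.logb_le_logb (by norm_num) h (by positivity)).1 h1
  have hdec : pr p (fun ω => bad (M ω) (Z ω)) =
      ∑ z, ∑ m, if bad m z then pr p (fun ω => Enc (M ω) = Enc m ∧ Z ω = z) else 0 := by
    have : ∀ z m, (if bad m z then pr p (fun ω => Enc (M ω) = Enc m ∧ Z ω = z) else 0) =
        ∑ ω, if Z ω = z then (if M ω = m then (if bad m z then p ω else 0) else 0) else 0 := by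
      intro z m
      unfold pr
      split_ifs with h
      · apply Finset.sum_congr rfl
        intro ω _
        simp only [hreg.eq_iff]
        by_cases h1 : M ω = m <;> by_cases h2 : Z ω = z <;> simp [h1, h2]
      · simp
    simp only [this]
    rw [Finset.sum_congr rfl fun z _ => Finset.sum_comm, Finset.sum_comm]
    unfold pr
    apply Finset.sum_congr rfl
    intro ω _
    rw [Finset.sum_eq_single (Z ω), Finset.sum_eq_single (M ω)]
    · simp
    · intro m _ hm
      simp [hm.symm]
    · simp
    · intro z _ hz
      simp [hz.symm]
    · simp
  have hz : ∀ z, (∑ m, if bad m z then pr p (fun ω => Enc (M ω) = Enc m ∧ Z ω = z) else 0) ≤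
      (δ * (Fintype.card F : ℝ) ^ k) * s z := by
    intro z
    have h := (div_le_iff₀ hqk).1 (h0 (A z))
    refine le_trans ?_ (mul_le_mul_of_nonneg_right h (hs0 z))
    rw [← Finset.sum_filter, ← nsmul_eq_mul]
    exact Finset.sum_le_card_nsmul _ _ _ fun m _ => hsx z _
  change pr p (fun ω => bad (M ω) (Z ω)) ≤ _
  rw [hdec]
  calc _ ≤ ∑ z, (δ * (Fintype.card F : ℝ) ^ k) * s z := Finset.sum_le_sum fun z _ => hz z
    _ = (δ * (Fintype.card F : ℝ) ^ k) * ∑ z, s z := by rw [Finset.mul_sum]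
    _ ≤ (δ * (Fintype.card F : ℝ) ^ k) *
        ((Fintype.card F : ℝ) ^ (ρ * n) * (1 / (Fintype.card F : ℝ) ^ k)) :=
      mul_le_mul_of_nonneg_left hS (by positivity)
    _ = _ := by field_simp
end

section
/- Let F be a finite field, let k be a positive integer with (k+2)·1_F ≠ 0 in F, let m ∈ F^k, α ∈ F^k with α ≠ 0, and β, γ ∈ F. Define f(m,a) = a^{k+2} + Σ_{i=1}^k m_i a^i. Then the polynomial P(X) = f(m,X) + γ − f(m+α, X+β) = X^{k+2} + Σ_{i=1}^k m_i X^i + γ − (X+β)^{k+2} − Σ_{i=1}^k (m_i+α_i)(X+β)^i is a nonzero polynomial in F[X] of degree at most k+1. -/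
open Polynomial

/-- with `f(m,a) = a^{k+2} + Σ_{i=1}^k m_i a^i`, for `α ≠ 0` the polynomial
`P(X) = f(m,X) + γ − f(m+α, X+β)` is a nonzero polynomial of degree at most `k+1`. -/
theorem stmt6 {F : Type*} [Field F] [Fintype F] (k : ℕ) (hk : 0 < k)
    (hchar : ((k + 2 : ℕ) : F) ≠ 0)
    (m α : Fin k → F) (hα : α ≠ 0) (β γ : F) :
    (X ^ (k + 2) + ∑ i : Fin k, C (m i) * X ^ ((i : ℕ) + 1) + C γ
        - ((X + C β) ^ (k + 2)
          + ∑ i : Fin k, C (m i + α i) * (X + C β) ^ ((i : ℕ) + 1))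
      : Polynomial F) ≠ 0 ∧
    (X ^ (k + 2) + ∑ i : Fin k, C (m i) * X ^ ((i : ℕ) + 1) + C γ
        - ((X + C β) ^ (k + 2)
          + ∑ i : Fin k, C (m i + α i) * (X + C β) ^ ((i : ℕ) + 1))
      : Polynomial F).natDegree ≤ k + 1 := by
  have key : ∀ N, k + 1 ≤ N →
      (X ^ (k + 2) + ∑ i : Fin k, C (m i) * X ^ ((i : ℕ) + 1) + C γ
        - ((X + C β) ^ (k + 2)
          + ∑ i : Fin k, C (m i + α i) * (X + C β) ^ ((i : ℕ) + 1))
      : Polynomial F).coeff N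
      = (if N = k + 2 then 1 else 0) - β ^ (k + 2 - N) * ((k + 2).choose N : F) := by
    intro N hN
    have h1 : ∑ i : Fin k, (C (m i) * X ^ ((i : ℕ) + 1) : Polynomial F).coeff N = 0 := by
      refine Finset.sum_eq_zero fun i _ => ?_
      have := i.2
      rw [coeff_C_mul, coeff_X_pow, if_neg (by omega), mul_zero]
    have h2 : ∑ i : Fin k,
        (C (m i + α i) * (X + C β) ^ ((i : ℕ) + 1) : Polynomial F).coeff N = 0 := by
      refine Finset.sum_eq_zero fun i _ => ?_
      have := i.2
      rw [coeff_C_mul, coeff_X_add_C_pow, Nat.choose_eq_zero_of_lt (by omega)]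
      simp
    have h3 : (C γ : Polynomial F).coeff N = 0 := by
      rw [coeff_C, if_neg (by omega)]
    rw [coeff_sub, coeff_add, coeff_add, coeff_add, finset_sum_coeff, finset_sum_coeff, h1, h2, h3,
      coeff_X_pow, coeff_X_add_C_pow]
    ring
  constructor
  · intro h0
    have hβ : β = 0 := by
      have := key (k + 1) le_rfl
      rw [h0, coeff_zero, if_neg (by omega), show k + 2 - (k + 1) = 1 by omega,
        show (k + 2).choose (k + 1) = k + 2 from Nat.choose_succ_self_right (k + 1), pow_one,
        zero_sub, eq_comm, neg_eq_zero] at this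
      exact (mul_eq_zero.mp this).resolve_right hchar
    apply hα
    funext j
    have hj := j.2
    have h := congrArg (fun p => Polynomial.coeff p ((j : ℕ) + 1)) h0
    subst hβ
    have e : ∀ i : Fin k, (((j : ℕ) + 1 = (i : ℕ) + 1) ↔ j = i) := by
      intro i
      rw [Fin.ext_iff]
      omega
    simp only [coeff_sub, coeff_add, finset_sum_coeff, C_0, add_zero, coeff_C_mul, coeff_X_pow,
      coeff_C, coeff_zero, e, mul_ite, mul_one, mul_zero, Finset.sum_ite_eq, Finset.mem_univ,
      if_true, Nat.succ_ne_zero, if_false] at h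
    simp only [Pi.zero_apply]
    linear_combination -h
  · rw [natDegree_le_iff_coeff_eq_zero]
    intro N hN
    rw [key N (by omega)]
    by_cases h : N = k + 2
    · subst h
      simp
    · rw [if_neg h, Nat.choose_eq_zero_of_lt (by omega)]
      simp
end

section
/- Let F be a finite field with q elements, let k be a positive integer with (k+2)·1_F ≠ 0 in F, let m ∈ F^k, α ∈ F^k with α ≠ 0, and β, γ ∈ F. Define f(m,a) = a^{k+2} + Σ_{i=1}^k m_i a^i. Then the set {x ∈ F : f(m+α, x+β) = f(m,x) + γ} has cardinality at most k+1. -/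
open scoped Classical BigOperators

open Polynomial in
lemma aux_coeff {F : Type*} [Field F] (k : ℕ) (c : Fin k → F) (β : F) (N : ℕ) (hN : k < N) :
    (∑ i : Fin k, C (c i) * (X + C β) ^ ((i : ℕ) + 1)).coeff N = 0 := by
  rw [finset_sum_coeff]
  apply Finset.sum_eq_zero
  intro i _
  have hi := i.2
  rw [coeff_C_mul, coeff_X_add_C_pow, Nat.choose_eq_zero_of_lt (by omega)]
  simp

/-- with `f(m,a) = a^{k+2} + Σ_{i=1}^k m_i a^i`, for `α ≠ 0` the set
`{x ∈ F : f(m+α, x+β) = f(m,x) + γ}` has cardinality at most `k+1`. -/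
theorem stmt7 {F : Type*} [Field F] [Fintype F] (k : ℕ) (hk : 0 < k)
    (hchar : ((k + 2 : ℕ) : F) ≠ 0)
    (m α : Fin k → F) (hα : α ≠ 0) (β γ : F) :
    (Finset.univ.filter (fun x : F =>
        (x + β) ^ (k + 2) + ∑ i : Fin k, (m i + α i) * (x + β) ^ ((i : ℕ) + 1)
          = x ^ (k + 2) + ∑ i : Fin k, m i * x ^ ((i : ℕ) + 1) + γ)).card ≤ k + 1 := by
  open Polynomial in
  let P : F[X] := (X + C β) ^ (k + 2)
    + ∑ i : Fin k, C (m i + α i) * (X + C β) ^ ((i : ℕ) + 1)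
    - ((X + C 0) ^ (k + 2) + ∑ i : Fin k, C (m i) * (X + C 0) ^ ((i : ℕ) + 1) + C γ)
  have hco : ∀ N, k < N → P.coeff N = β ^ (k + 2 - N) * ((k + 2).choose N : F)
      - 0 ^ (k + 2 - N) * ((k + 2).choose N : F) := by
    intro N hN
    simp only [P, Polynomial.coeff_sub, Polynomial.coeff_add, aux_coeff k _ _ N hN,
      Polynomial.coeff_X_add_C_pow, Polynomial.coeff_C, if_neg (show N ≠ 0 by omega), add_zero]
  have hdeg : P.natDegree ≤ k + 1 := by
    rw [Polynomial.natDegree_le_iff_coeff_eq_zero]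
    intro N hN
    rw [hco N (by omega)]
    have : k + 2 - N = 0 := by omega
    simp [this]
  have hP : P ≠ 0 := by
    intro h0
    have h1 := hco (k + 1) (by omega)
    rw [h0, show k + 2 - (k + 1) = 1 by omega, Nat.choose_succ_self_right] at h1
    have hβ : β = 0 := by
      simp only [Polynomial.coeff_zero, pow_one, zero_mul, sub_zero] at h1
      exact (mul_eq_zero.mp h1.symm).resolve_right hchar
    apply hα
    funext j
    have h2 : P.coeff (j + 1) = α j := by
      have key : ∀ c : Fin k → F, (∑ i : Fin k, Polynomial.C (c i) *
          (Polynomial.X : Polynomial F) ^ ((i : ℕ) + 1)).coeff (j + 1) = c j := by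
        intro c
        simp [Polynomial.finset_sum_coeff, Polynomial.coeff_X_pow, Fin.val_inj]
      simp only [P, hβ, Polynomial.C_0, add_zero, Polynomial.coeff_sub, Polynomial.coeff_add, key]
      simp [Polynomial.coeff_C, key]
    rw [← h2, h0]; simp
  refine le_trans (Polynomial.card_le_degree_of_subset_roots (p := P) ?_) hdeg
  intro x hx
  have hx' := (Finset.mem_filter.mp hx).2
  rw [Polynomial.mem_roots hP, Polynomial.IsRoot.def]
  simp only [P, Polynomial.eval_sub, Polynomial.eval_add, Polynomial.eval_pow, Polynomial.eval_X,
    Polynomial.eval_C, Polynomial.eval_finset_sum, Polynomial.eval_mul, add_zero]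
  rw [hx', sub_self]
end

section
/- Let F be a finite field with q elements and let k, σ be positive integers with (k+2)·1_F ≠ 0 in F. Define f(m,a) = a^{k+2} + Σ_{i=1}^k m_i a^i, Enc(m,x) = (m, x, f(m,x_1), …, f(m,x_σ)) ∈ F^{k+2σ} for m ∈ F^k, x ∈ F^σ, and Dec(m', x', y_1, …, y_σ) = m' if y_j = f(m', x'_j) for all j ∈ [σ] and ⊥ otherwise. Then (Enc, Dec) is a regular coding scheme and a strong (0, ((k+1)/q)^σ)-AMD code: for every m ∈ F^k and every (α, β, γ) ∈ F^k × F^σ × F^σ, with X uniform on F^σ, Pr[Dec(Enc(m,X) + (α,β,γ)) ∉ {m, ⊥}] ≤ ((k+1)/q)^σ. -/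
open scoped Classical BigOperators

open Polynomial in
theorem aux_root_card {F : Type*} [Field F] [Fintype F] (k : ℕ)
    (hchar : ((k + 2 : ℕ) : F) ≠ 0) (m α : Fin k → F) (hα : α ≠ 0) (b c : F) :
    (Finset.univ.filter (fun a : F =>
      (a ^ (k + 2) + ∑ i : Fin k, m i * a ^ ((i : ℕ) + 1)) + c =
      ((a + b) ^ (k + 2) + ∑ i : Fin k, (m i + α i) * (a + b) ^ ((i : ℕ) + 1)))).card ≤ k + 1 := by
  set Q : F[X] := (∑ i : Fin k, C (m i + α i) * (X + C b) ^ ((i : ℕ) + 1))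
    - (∑ i : Fin k, C (m i) * X ^ ((i : ℕ) + 1)) - C c with hQ
  set D : F[X] := (X + C b) ^ (k + 2) - X ^ (k + 2) with hD
  have hQd : Q.natDegree ≤ k := by
    refine natDegree_sub_le_of_le (natDegree_sub_le_of_le ?_ ?_) (by simp)
      |>.trans (by simp : max (max k k) 0 ≤ k)
    · refine natDegree_sum_le_of_forall_le _ _ fun i _ => ?_
      refine (natDegree_C_mul_le _ _).trans ?_
      rw [natDegree_pow, natDegree_X_add_C]
      omega
    · refine natDegree_sum_le_of_forall_le _ _ fun i _ => ?_
      refine (natDegree_C_mul_le _ _).trans ?_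
      rw [natDegree_X_pow]
      omega
  have hDd : D.natDegree ≤ k + 1 := by
    rw [natDegree_le_iff_coeff_eq_zero]
    intro N hN
    rw [hD, coeff_sub, coeff_X_add_C_pow, coeff_X_pow]
    rcases Nat.eq_or_lt_of_le (show k + 2 ≤ N by omega) with h | h
    · subst h; simp
    · rw [Nat.choose_eq_zero_of_lt h, if_neg (by omega)]; simp
  have hne : D + Q ≠ 0 := by
    by_cases hb : b = 0
    · obtain ⟨i, hi⟩ := Function.ne_iff.mp hα
      intro h0
      apply hi
      have h1 := congrArg (fun p => coeff p ((i : ℕ) + 1)) h0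
      simp only [hD, hQ, hb, map_zero, add_zero, sub_self, zero_add, coeff_sub, finsetSum_coeff,
        coeff_C_mul, coeff_X_pow, coeff_C_succ, coeff_zero, sub_zero, add_left_inj,
        Fin.val_inj, mul_ite, mul_one, mul_zero, Finset.sum_ite_eq, Finset.mem_univ, if_true] at h1
      simpa using h1
    · intro h0
      have h1 := congrArg (fun p => coeff p (k + 1)) h0
      simp only [coeff_add, coeff_zero] at h1
      rw [coeff_eq_zero_of_natDegree_lt (p := Q) (by omega), hD, coeff_sub, coeff_X_add_C_pow,
        coeff_X_pow, if_neg (by omega), show k + 2 - (k + 1) = 1 by omega,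
        Nat.choose_succ_self_right] at h1
      simp only [pow_one, sub_zero, add_zero, mul_eq_zero] at h1
      rcases h1 with h | h
      · exact hb h
      · exact hchar h
  have hPd : (D + Q).natDegree ≤ k + 1 := natDegree_add_le_of_degree_le hDd (by omega)
  refine le_trans ?_ hPd
  refine le_trans (Finset.card_le_card ?_)
    ((Multiset.toFinset_card_le (D + Q).roots).trans (card_roots' _))
  intro a ha
  rw [Multiset.mem_toFinset, mem_roots hne, IsRoot.def]
  have ha := (Finset.mem_filter.mp ha).2
  simp only [hD, hQ, eval_add, eval_sub, eval_pow, eval_X, eval_C, eval_finsetSum, eval_mul]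
  linear_combination -ha

/-- the coding scheme `Enc(m,x) = (m, x, f(m,x_1), …, f(m,x_σ))` with
`f(m,a) = a^{k+2} + Σ_{i=1}^k m_i a^i` and the natural decoder is a regular coding
scheme and a strong `(0, ((k+1)/q)^σ)`-AMD code. -/
theorem stmt8 {F : Type*} [Field F] [Fintype F] (k σn : ℕ)
    (hk : 0 < k) (hσ : 0 < σn) (hchar : ((k + 2 : ℕ) : F) ≠ 0) :
    let f : (Fin k → F) → F → F :=
      fun m a => a ^ (k + 2) + ∑ i : Fin k, m i * a ^ ((i : ℕ) + 1)
    let Enc : (Fin k → F) × (Fin σn → F) → (Fin k → F) × (Fin σn → F) × (Fin σn → F) :=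
      fun mx => (mx.1, mx.2, fun j => f mx.1 (mx.2 j))
    let Dec : (Fin k → F) × (Fin σn → F) × (Fin σn → F) → Option (Fin k → F) :=
      fun c => if ∀ j, c.2.2 j = f c.1 (c.2.1 j) then some c.1 else none
    -- regular coding scheme
    Function.Injective Enc ∧
    (∀ (m : Fin k → F) (x : Fin σn → F), Dec (Enc (m, x)) = some m) ∧
    -- strong (0, ((k+1)/q)^σ)-AMD security: for every message and fixed offset,
    -- over a uniformly random x the tampering succeeds w.p. at most ((k+1)/q)^σ
    (∀ (m α : Fin k → F) (β γ : Fin σn → F),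
      ((Finset.univ.filter (fun x : Fin σn → F =>
          Dec (Enc (m, x) + (α, β, γ))
            ∉ ({some m, none} : Set (Option (Fin k → F))))).card : ℝ)
        / (Fintype.card F : ℝ) ^ σn
        ≤ (((k : ℝ) + 1) / (Fintype.card F : ℝ)) ^ σn) := by
  intro f Enc Dec
  have hDec : ∀ (m : Fin k → F) (x : Fin σn → F), Dec (Enc (m, x)) = some m := by
    intro m x
    simp [Dec, Enc]
  refine ⟨?_, hDec, ?_⟩
  · rintro ⟨m, x⟩ ⟨m', x'⟩ h
    simp only [Enc, Prod.mk.injEq] at h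
    exact Prod.ext h.1 h.2.1
  intro m α β γ
  rw [div_pow]
  refine div_le_div_of_nonneg_right ?_ (by positivity)
  set A : Fin σn → Finset F := fun j => Finset.univ.filter (fun a : F =>
      (a ^ (k + 2) + ∑ i : Fin k, m i * a ^ ((i : ℕ) + 1)) + γ j =
      ((a + β j) ^ (k + 2) + ∑ i : Fin k, (m i + α i) * (a + β j) ^ ((i : ℕ) + 1))) with hA
  by_cases hα : α = 0
  · rw [Finset.filter_false_of_mem]
    · simp; positivity
    · intro x _ h
      apply h
      simp only [Dec, Enc, hα]
      split_ifs <;> simp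
  have hsub : (Finset.univ.filter (fun x : Fin σn → F =>
          Dec (Enc (m, x) + (α, β, γ))
            ∉ ({some m, none} : Set (Option (Fin k → F))))) ⊆ Fintype.piFinset A := by
    intro x hx
    have hx := (Finset.mem_filter.mp hx).2
    rw [Fintype.mem_piFinset]
    by_contra hcon
    apply hx
    right
    simp only [Dec]
    rw [if_neg]
    · rfl
    · intro hall
      apply hcon
      intro j
      exact Finset.mem_filter.mpr ⟨Finset.mem_univ _, hall j⟩
  have hcard := Finset.card_le_card hsub
  rw [Fintype.card_piFinset] at hcard
  have h2 : ∏ j, (A j).card ≤ (k + 1) ^ σn := by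
    refine (Finset.prod_le_pow_card _ _ (k + 1) fun j _ =>
      aux_root_card k hchar m α hα (β j) (γ j)).trans (by simp)
  exact_mod_cast hcard.trans h2
end

section
/- Let F be a finite field with q elements, let k, σ be positive integers with (k+2)·1_F ≠ 0 in F, and let 0 < ρ < 1/2. Define f(m,a) = a^{k+2} + Σ_{i=1}^k m_i a^i, Enc(m,x) = (m, x, f(m,x_1), …, f(m,x_σ)) ∈ F^{k+2σ}, and Dec(m', x', y_1, …, y_σ) = m' if y_j = f(m', x'_j) for all j ∈ [σ] and ⊥ otherwise. Then (Enc, Dec) is a strong (ρ, q^{ρ(k+2σ) − σ}·(k+1)^σ)-AMD code. -/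
open scoped Classical BigOperators

lemma aux_pr_nonneg {Ω : Type*} [Fintype Ω] (p : Ω → ℝ) (hp : ∀ ω, 0 ≤ p ω) (E : Ω → Prop) :
    0 ≤ pr p E := by
  unfold pr
  exact Finset.sum_nonneg fun ω _ => by split_ifs <;> simp [hp]

lemma aux_pr_mono {Ω : Type*} [Fintype Ω] (p : Ω → ℝ) (hp : ∀ ω, 0 ≤ p ω) (E E' : Ω → Prop)
    (h : ∀ ω, E ω → E' ω) : pr p E ≤ pr p E' := by
  unfold pr
  refine Finset.sum_le_sum fun ω _ => ?_
  by_cases h1 : E ω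
  · simp [h1, h ω h1]
  · simp only [h1, if_false]
    split_ifs <;> simp [hp]

lemma aux_pr_split {Ω β : Type*} [Fintype Ω] [Fintype β] (p : Ω → ℝ) (E : Ω → Prop)
    (Y : Ω → β) : pr p E = ∑ y : β, pr p (fun ω => E ω ∧ Y ω = y) := by
  unfold pr
  rw [Finset.sum_comm]
  refine Finset.sum_congr rfl fun ω _ => ?_
  by_cases h1 : E ω <;> simp [h1]

lemma aux_bad {Ω Rnd ZS T : Type*} [Fintype Ω] [Fintype Rnd] [Fintype ZS] [Fintype T]
    (p : Ω → ℝ) (hp : ∀ ω, 0 ≤ p ω) (hp1 : ∑ ω, p ω = 1)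
    (R : Ω → Rnd) (Z : Ω → ZS) (W : Ω → T)
    (hind : ∀ (r : Rnd) (z : ZS) (w : T),
          pr p (fun ω => (R ω = r ∧ Z ω = z) ∧ W ω = w)
            = pr p (fun ω => R ω = r ∧ Z ω = z) * pr p (fun ω => W ω = w))
    (bad : ZS → T → Rnd → Prop) (N : ℕ)
    (hN : ∀ z w, (Finset.univ.filter (bad z w)).card ≤ N)
    (s : ZS → ℝ) (hs : ∀ r z, pr p (fun ω => R ω = r ∧ Z ω = z) ≤ s z)
    (hs0 : ∀ z, 0 ≤ s z) :
    pr p (fun ω => bad (Z ω) (W ω) (R ω)) ≤ (∑ z, s z) * N := by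
  have hW : ∑ w, pr p (fun ω => W ω = w) = 1 := by
    have := aux_pr_split p (fun _ => True) W
    simp only [true_and] at this
    rw [← this]
    simpa [pr] using hp1
  rw [aux_pr_split p _ Z, Finset.sum_mul]
  refine Finset.sum_le_sum fun z _ => ?_
  rw [aux_pr_split p _ W]
  calc _ ≤ ∑ w, s z * N * pr p (fun ω => W ω = w) := ?_
    _ = s z * N := by rw [← Finset.mul_sum, hW, mul_one]
  refine Finset.sum_le_sum fun w _ => ?_
  rw [aux_pr_split p _ R]
  have h0 := aux_pr_nonneg p hp (fun ω => W ω = w)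
  calc _ ≤ ∑ r, if bad z w r then s z * pr p (fun ω => W ω = w) else 0 := ?_
    _ = ((Finset.univ.filter (bad z w)).card : ℝ) * (s z * pr p (fun ω => W ω = w)) := by
        rw [← Finset.sum_filter, Finset.sum_const, nsmul_eq_mul]
    _ ≤ N * (s z * pr p (fun ω => W ω = w)) := by
        have := hs0 z
        have h2 : ((Finset.univ.filter (bad z w)).card : ℝ) ≤ N := by exact_mod_cast hN z w
        gcongr
    _ = _ := by ring
  refine Finset.sum_le_sum fun r _ => ?_
  split_ifs with hb
  · calc _ ≤ pr p (fun ω => (R ω = r ∧ Z ω = z) ∧ W ω = w) := by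
          refine aux_pr_mono p hp _ _ ?_
          rintro ω ⟨⟨⟨_, h1⟩, h2⟩, h3⟩
          exact ⟨⟨h3, h1⟩, h2⟩
      _ = _ := hind r z w
      _ ≤ _ := by have := hs r z; gcongr
  · apply le_of_eq
    unfold pr
    refine Finset.sum_eq_zero fun ω _ => if_neg ?_
    rintro ⟨⟨⟨hbd, h1⟩, h2⟩, h3⟩
    subst h1 h2 h3
    exact hb hbd

open Polynomial in
lemma aux_roots {F : Type*} [Field F] [Fintype F] (k : ℕ)
    (hchar : ((k + 2 : ℕ) : F) ≠ 0) (m dm : Fin k → F) (hdm : dm ≠ 0) (d e : F) :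
    (Finset.univ.filter (fun x : F =>
      (x ^ (k + 2) + ∑ i : Fin k, m i * x ^ ((i : ℕ) + 1)) + e
        = (x + d) ^ (k + 2) + ∑ i : Fin k, (m i + dm i) * (x + d) ^ ((i : ℕ) + 1))).card
      ≤ k + 1 := by
  set P : F[X] := ((X + C d) ^ (k + 2) - X ^ (k + 2))
    + ((∑ i : Fin k, C (m i + dm i) * (X + C d) ^ ((i : ℕ) + 1))
        - (∑ i : Fin k, C (m i) * X ^ ((i : ℕ) + 1)) - C e) with hP
  have hs1 : (∑ i : Fin k, C (m i + dm i) * (X + C d) ^ ((i : ℕ) + 1)).natDegree ≤ k := by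
    refine natDegree_sum_le_of_forall_le _ _ fun i _ => ?_
    refine (natDegree_C_mul_le _ _).trans ?_
    rw [natDegree_pow, natDegree_X_add_C]; have := i.2; omega
  have hs2 : (∑ i : Fin k, C (m i) * X ^ ((i : ℕ) + 1)).natDegree ≤ k := by
    refine natDegree_sum_le_of_forall_le _ _ fun i _ => ?_
    refine (natDegree_C_mul_le _ _).trans ?_
    rw [natDegree_X_pow]; have := i.2; omega
  have hQ : ((∑ i : Fin k, C (m i + dm i) * (X + C d) ^ ((i : ℕ) + 1))
        - (∑ i : Fin k, C (m i) * X ^ ((i : ℕ) + 1)) - C e).natDegree ≤ k := by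
    refine (natDegree_sub_le _ _).trans (max_le ((natDegree_sub_le _ _).trans (max_le hs1 hs2)) ?_)
    simp
  have hdeg : P.natDegree ≤ k + 1 := by
    rw [natDegree_le_iff_coeff_eq_zero]
    intro N hN
    rw [hP, coeff_add, coeff_eq_zero_of_natDegree_lt (lt_of_le_of_lt hQ (by omega)), add_zero,
      coeff_sub, coeff_X_add_C_pow, coeff_X_pow]
    rcases eq_or_lt_of_le (show k + 2 ≤ N by omega) with h | h
    · subst h; simp
    · rw [Nat.choose_eq_zero_of_lt h]; simp [h.ne']
  have hne : P ≠ 0 := by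
    by_cases hd : d = 0
    · subst hd
      obtain ⟨i0, hi0⟩ := Function.ne_iff.mp hdm
      intro h0
      have hc := congrArg (fun Q : F[X] => Q.coeff ((i0 : ℕ) + 1)) h0
      apply hi0
      simp only [hP, map_zero, add_zero, sub_self, zero_add, coeff_sub, finsetSum_coeff,
        coeff_C_mul, coeff_X_pow, coeff_C, coeff_zero, add_left_inj, Fin.val_inj,
        Nat.succ_ne_zero, if_false, sub_zero] at hc
      simpa [Fin.val_inj] using hc
    · intro h0
      have hc := congrArg (fun Q : F[X] => Q.coeff (k + 1)) h0
      simp only [hP] at hc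
      rw [coeff_add, coeff_eq_zero_of_natDegree_lt (lt_of_le_of_lt hQ (by omega)), add_zero,
        coeff_sub, coeff_X_add_C_pow, coeff_X_pow, Nat.choose_succ_self_right] at hc
      have h12 : k + 2 - (k + 1) = 1 := by omega
      rw [h12] at hc
      simp at hc
      rcases hc with hc | hc
      · exact hd hc
      · apply hchar; push_cast; linear_combination hc
  calc _ ≤ P.roots.toFinset.card := by
        apply Finset.card_le_card
        intro x hx
        simp only [Finset.mem_filter, Finset.mem_univ, true_and] at hx
        rw [Multiset.mem_toFinset, mem_roots hne, IsRoot.def, hP]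
        simp only [eval_add, eval_sub, eval_pow, eval_X, eval_C, eval_finsetSum, eval_mul]
        linear_combination -hx
    _ ≤ P.roots.card := Multiset.toFinset_card_le _
    _ ≤ P.natDegree := card_roots' _
    _ ≤ k + 1 := hdeg

/-- the coding scheme `Enc(m,x) = (m, x, f(m,x_1), …, f(m,x_σ))` with
`f(m,a) = a^{k+2} + Σ_{i=1}^k m_i a^i` and the natural decoder is a strong
`(ρ, q^{ρ(k+2σ) − σ}·(k+1)^σ)`-AMD code for any `0 < ρ < 1/2`. -/
theorem stmt9 {F : Type*} [Field F] [Fintype F] (k σn : ℕ)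
    (hk : 0 < k) (hσ : 0 < σn) (hchar : ((k + 2 : ℕ) : F) ≠ 0)
    (ρ : ℝ) (hρ0 : 0 < ρ) (hρ1 : ρ < 1 / 2) :
    IsStrongAMD
      (fun mx : (Fin k → F) × (Fin σn → F) =>
        ((mx.1, mx.2, fun j => (mx.2 j) ^ (k + 2)
            + ∑ i : Fin k, mx.1 i * (mx.2 j) ^ ((i : ℕ) + 1))
          : (Fin k → F) × (Fin σn → F) × (Fin σn → F)))
      (fun c : (Fin k → F) × (Fin σn → F) × (Fin σn → F) =>
        if ∀ j, c.2.2 j = (c.2.1 j) ^ (k + 2)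
            + ∑ i : Fin k, c.1 i * (c.2.1 j) ^ ((i : ℕ) + 1)
        then some c.1 else none)
      (k + 2 * σn) (Fintype.card F)
      ρ ((Fintype.card F : ℝ) ^ (ρ * ((k : ℝ) + 2 * σn) - σn) * ((k : ℝ) + 1) ^ σn) := by
  intro m Ω _ p hp hp1 R hR ZS _ Z T _ W hind hent A
  set Enc := (fun mx : (Fin k → F) × (Fin σn → F) =>
        ((mx.1, mx.2, fun j => (mx.2 j) ^ (k + 2)
            + ∑ i : Fin k, mx.1 i * (mx.2 j) ^ ((i : ℕ) + 1))
          : (Fin k → F) × (Fin σn → F) × (Fin σn → F))) with hEnc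
  have hinj : ∀ r r', Enc (m, r) = Enc (m, r') ↔ r = r' := by
    intro r r'
    constructor
    · intro h
      exact congrArg (fun c => c.2.1) h
    · rintro rfl; rfl
  set s : ZS → ℝ := fun z => ⨆ x, pr p (fun ω => Enc (m, R ω) = x ∧ Z ω = z) with hsdef
  have hs : ∀ r z, pr p (fun ω => R ω = r ∧ Z ω = z) ≤ s z := by
    intro r z
    have h1 := le_ciSup (f := fun x => pr p (fun ω => Enc (m, R ω) = x ∧ Z ω = z))
      (Set.finite_range _).bddAbove (Enc (m, r))
    simp only [hinj] at h1
    exact h1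
  have hs0 : ∀ z, 0 ≤ s z := fun z => (aux_pr_nonneg p hp _).trans (hs 0 z)
  have hq : (1 : ℝ) < Fintype.card F := by exact_mod_cast Fintype.one_lt_card
  have hq0 : (0 : ℝ) < Fintype.card F := by linarith
  have hcard : (Fintype.card (Fin σn → F) : ℝ) = (Fintype.card F : ℝ) ^ σn := by simp
  have hSpos : 0 < ∑ z, s z := by
    have h1 : ∑ z, pr p (fun ω => R ω = 0 ∧ Z ω = z) ≤ ∑ z, s z :=
      Finset.sum_le_sum fun z _ => hs 0 z
    rw [← aux_pr_split p (fun ω => R ω = 0) Z, hR 0, hcard] at h1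
    exact lt_of_lt_of_le (by positivity) h1
  set M : ℝ := ⨆ x, pr p (fun ω => Enc (m, R ω) = x) with hM
  have hMeq : M = (Fintype.card F : ℝ) ^ (-(σn : ℝ)) := by
    rw [Real.rpow_neg hq0.le, Real.rpow_natCast, ← one_div, ← hcard]
    apply le_antisymm
    · refine ciSup_le fun x => ?_
      rw [← hR x.2.1]
      refine aux_pr_mono p hp _ _ fun ω h => ?_
      exact congrArg (fun c => c.2.1) h
    · have h1 := le_ciSup (f := fun x => pr p (fun ω => Enc (m, R ω) = x))
        (Set.finite_range _).bddAbove (Enc (m, 0))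
      simp only [hinj] at h1
      rw [hR 0] at h1
      exact h1
  have hSle : ∑ z, s z ≤ (Fintype.card F : ℝ) ^ (ρ * ((k : ℝ) + 2 * σn) - σn) := by
    have h1 : -Real.logb 2 (∑ z, s z) ≥ -Real.logb 2 M
      - ρ * ((k + 2 * σn : ℕ) : ℝ) * Real.logb 2 (Fintype.card F) := hent
    rw [← Real.logb_le_logb (b := 2) (by norm_num) hSpos (by positivity),
      Real.logb_rpow_eq_mul_logb_of_pos hq0]
    rw [hMeq, Real.logb_rpow_eq_mul_logb_of_pos hq0] at h1
    push_cast at h1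
    linarith
  have key := aux_bad p hp hp1 R Z W hind (fun z w r =>
      (fun c : (Fin k → F) × (Fin σn → F) × (Fin σn → F) =>
        if ∀ j, c.2.2 j = (c.2.1 j) ^ (k + 2)
            + ∑ i : Fin k, c.1 i * (c.2.1 j) ^ ((i : ℕ) + 1)
        then some c.1 else none) (Enc (m, r) + A z w) ∉ ({some m, none} : Set (Option (Fin k → F))))
      ((k + 1) ^ σn) ?_ s hs hs0
  · refine key.trans ?_
    push_cast
    gcongr
  · intro z w
    by_cases hdm : (A z w).1 = 0
    · refine le_trans (Finset.card_le_card (t := ∅) ?_) (by simp)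
      · intro r hr
        exfalso
        simp only [Finset.mem_filter, Finset.mem_univ, true_and] at hr
        apply hr
        split_ifs
        · left; simp [hEnc, hdm]
        · right; rfl
    · calc _ ≤ (Fintype.piFinset fun j : Fin σn => Finset.univ.filter (fun x : F =>
      (x ^ (k + 2) + ∑ i : Fin k, m i * x ^ ((i : ℕ) + 1)) + (A z w).2.2 j
        = (x + (A z w).2.1 j) ^ (k + 2)
          + ∑ i : Fin k, (m i + (A z w).1 i) * (x + (A z w).2.1 j) ^ ((i : ℕ) + 1))).card := by
            apply Finset.card_le_card
            intro r hr
            simp only [Finset.mem_filter, Finset.mem_univ, true_and] at hr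
            rw [Fintype.mem_piFinset]
            intro j
            simp only [Finset.mem_filter, Finset.mem_univ, true_and]
            split_ifs at hr with h
            · exact h j
            · exact absurd (Or.inr rfl) hr
        _ = ∏ j : Fin σn, _ := Fintype.card_piFinset _
        _ ≤ ∏ j : Fin σn, (k + 1) := by
            refine Finset.prod_le_prod' fun j _ => ?_
            exact aux_roots k hchar m _ hdm _ _
        _ = _ := by simp
end

section
/- Let F be a finite field with q elements of characteristic greater than 2 and let k be a positive integer. Define g(m) = Σ_{j=1}^k m_j², Enc(m) = (m, g(m)) ∈ F^{k+1}, and Dec(m', y) = m' if y = g(m') and ⊥ otherwise. Then (Enc, Dec) is a weak (0, 1/q)-AMD code: for every (α, β) ∈ F^k × F and M uniform on F^k, Pr[Dec(Enc(M) + (α,β)) ∉ {M, ⊥}] ≤ 1/q. Moreover, for α ≠ 0 the probability Pr[Dec(Enc(M) + (α,β)) ≠ ⊥] equals exactly 1/q. -/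
open scoped Classical BigOperators

theorem fiber_count {F : Type*} [Field F] [Fintype F] (k : ℕ)
    (α : Fin k → F) (hα : α ≠ 0) (c : F) :
    (Finset.univ.filter (fun M : Fin k → F => ∑ j, α j * M j = c)).card * Fintype.card F
      = Fintype.card F ^ k := by
  obtain ⟨i, hi⟩ : ∃ i, α i ≠ 0 := by
    by_contra h
    push Not at h
    exact hα (funext h)
  have key : ∀ d : F, (Finset.univ.filter (fun M : Fin k → F => ∑ j, α j * M j = d)).card
      = (Finset.univ.filter (fun M : Fin k → F => ∑ j, α j * M j = c)).card := by
    intro d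
    have hs : ∀ e : F, ∑ j, α j * (Pi.single i ((α i)⁻¹ * e) : Fin k → F) j = e := by
      intro e
      rw [Finset.sum_eq_single i]
      · rw [Pi.single_eq_same, mul_inv_cancel_left₀ hi]
      · intro b _ hb
        rw [Pi.single_eq_of_ne hb, mul_zero]
      · intro h
        exact absurd (Finset.mem_univ i) h
    apply Finset.card_equiv (Equiv.addRight (Pi.single i ((α i)⁻¹ * (c - d)) : Fin k → F))
    intro M
    simp only [Finset.mem_filter, Finset.mem_univ, true_and, Equiv.coe_addRight, Pi.add_apply,
      mul_add, Finset.sum_add_distrib, hs]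
    constructor
    · intro h
      rw [h]; ring
    · intro h
      linear_combination h
  have h := Finset.card_eq_sum_card_fiberwise (s := (Finset.univ : Finset (Fin k → F)))
    (t := (Finset.univ : Finset F)) (f := fun M => ∑ j, α j * M j)
    (fun _ _ => by simp)
  have h2 : Finset.univ.card (α := Fin k → F) = ∑ d : F,
      (Finset.univ.filter (fun M : Fin k → F => ∑ j, α j * M j = c)).card := by
    rw [h]
    refine Finset.sum_congr rfl fun d _ => ?_
    rw [← key d]
  simp only [Finset.card_univ, Finset.sum_const, smul_eq_mul, Fintype.card_fun,
    Fintype.card_fin] at h2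
  rw [h2, mul_comm]

/-- over a finite field of characteristic `> 2`, the coding scheme
`Enc(m) = (m, Σ_j m_j²)` with the natural decoder is a weak `(0, 1/q)`-AMD code, and
for every offset `(α, β)` with `α ≠ 0` the probability (over a uniform message `M`)
that `Dec(Enc(M) + (α,β)) ≠ ⊥` is exactly `1/q`. -/
theorem stmt10 {F : Type*} [Field F] [Fintype F] (hchar : 2 < ringChar F)
    (k : ℕ) (hk : 0 < k) :
    let g : (Fin k → F) → F := fun m => ∑ j : Fin k, (m j) ^ 2
    let Enc : (Fin k → F) → (Fin k → F) × F := fun m => (m, g m)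
    let Dec : (Fin k → F) × F → Option (Fin k → F) :=
      fun c => if c.2 = g c.1 then some c.1 else none
    -- coding scheme
    (∀ m : Fin k → F, Dec (Enc m) = some m) ∧
    -- weak (0, 1/q)-AMD security: for every fixed offset, over a uniform message M
    (∀ (α : Fin k → F) (β : F),
      ((Finset.univ.filter (fun M : Fin k → F =>
          Dec (Enc M + (α, β)) ∉ ({some M, none} : Set (Option (Fin k → F))))).card : ℝ)
        / (Fintype.card F : ℝ) ^ k ≤ 1 / (Fintype.card F : ℝ)) ∧
    -- moreover, for α ≠ 0 the probability of not detecting is exactly 1/q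
    (∀ (α : Fin k → F) (β : F), α ≠ 0 →
      ((Finset.univ.filter (fun M : Fin k → F =>
          Dec (Enc M + (α, β)) ≠ none)).card : ℝ)
        / (Fintype.card F : ℝ) ^ k = 1 / (Fintype.card F : ℝ)) := by
  intro g Enc Dec
  have h2 : (2 : F) ≠ 0 := Ring.two_ne_zero (by omega)
  have hq : (0 : ℝ) < Fintype.card F := by exact_mod_cast Fintype.card_pos
  have hdec : ∀ (α : Fin k → F) (β : F) (M : Fin k → F),
      Dec (Enc M + (α, β)) = if g M + β = g (M + α) then some (M + α) else none :=
    fun _ _ _ => rfl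
  have hg : ∀ (α : Fin k → F) (β : F) (M : Fin k → F),
      g M + β = g (M + α) ↔ ∑ j, α j * M j = (β - g α) / 2 := by
    intro α β M
    have : g (M + α) = g M + 2 * ∑ j, α j * M j + g α := by
      simp only [g, Pi.add_apply, Finset.mul_sum, ← Finset.sum_add_distrib]
      exact Finset.sum_congr rfl fun j _ => by ring
    rw [this, eq_div_iff h2]
    constructor <;> intro h <;> linear_combination -h
  have hexact : ∀ (α : Fin k → F) (β : F), α ≠ 0 →
      ((Finset.univ.filter (fun M : Fin k → F =>
          Dec (Enc M + (α, β)) ≠ none)).card : ℝ)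
        / (Fintype.card F : ℝ) ^ k = 1 / (Fintype.card F : ℝ) := by
    intro α β hα
    have he : (Finset.univ.filter (fun M : Fin k → F => Dec (Enc M + (α, β)) ≠ none))
        = Finset.univ.filter (fun M : Fin k → F => ∑ j, α j * M j = (β - g α) / 2) := by
      ext M
      simp only [Finset.mem_filter, Finset.mem_univ, true_and, hdec, ← hg]
      split_ifs with h <;> simp [h]
    have hc := fiber_count k α hα ((β - g α) / 2)
    rw [he, div_eq_div_iff (pow_pos hq k).ne' hq.ne', one_mul]
    exact_mod_cast hc
  refine ⟨fun m => if_pos rfl, fun α β => ?_, hexact⟩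
  by_cases hα : α = 0
  · have he : (Finset.univ.filter (fun M : Fin k → F =>
          Dec (Enc M + (α, β)) ∉ ({some M, none} : Set (Option (Fin k → F))))) = ∅ := by
      ext M
      simp only [Finset.mem_filter, Finset.mem_univ, true_and, hdec, hα, add_zero]
      split_ifs <;> simp
    rw [he]
    simp
  · rw [← hexact α β hα]
    gcongr with M
    intro h
    rw [h]
    simp
end

section
/- Let k ≥ 1 and let ρ ∈ (0,1) satisfy 2ρ + k/n ≥ 1. Then no coding scheme Enc : {0,1}^k × {0,1}^σ → {0,1}^n, Dec : {0,1}^n → {0,1}^k ∪ {⊥} is a strong (ρ, 3/16)-AMD code: there exist a message m ∈ {0,1}^k, a finite set 𝒵, a random variable Z on 𝒵 jointly distributed with the uniform randomness R on {0,1}^σ (possibly depending on additional randomness independent of R) with H̃∞(Enc(m,R) | Z) ≥ H∞(Enc(m,R)) − ρ·n, and a randomized function 𝖠 : 𝒵 → {0,1}^n whose internal randomness is independent of R, such that Pr[Dec(Enc(m,R) ⊕ 𝖠(Z)) ∉ {m, ⊥}] > 3/16, where ⊕ denotes bitwise XOR. -/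
open scoped Classical BigOperators

/-- A binary coding scheme `(Enc, Dec)` is a strong `(ρ, δ)`-AMD code: for every message
`m`, every probability space, every uniform randomness `R`, every leakage `Z` (jointly
distributed with `R`, possibly depending on additional randomness independent of `R`)
satisfying `H̃∞(Enc(m,R) | Z) ≥ H∞(Enc(m,R)) − ρ·n`, and every randomized adversary `A`
whose internal random seed `W` is independent of `(R, Z)`,
`Pr[Dec(Enc(m,R) ⊕ A(Z)) ∉ {m, ⊥}] ≤ δ`, where `⊕` is bitwise XOR. -/
def IsStrongAMDBin (k σn n : ℕ)
    (Enc : (Fin k → Bool) × (Fin σn → Bool) → (Fin n → Bool))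
    (Dec : (Fin n → Bool) → Option (Fin k → Bool)) (ρ δ : ℝ) : Prop :=
  ∀ (m : Fin k → Bool) (Ω : Type) [Fintype Ω] (p : Ω → ℝ),
    (∀ ω, 0 ≤ p ω) → (∑ ω : Ω, p ω) = 1 →
    ∀ (R : Ω → (Fin σn → Bool)),
      (∀ r : Fin σn → Bool, pr p (fun ω => R ω = r) = 1 / (2 : ℝ) ^ σn) →
      ∀ (ZS : Type) [Fintype ZS] (Z : Ω → ZS) (T : Type) [Fintype T] (W : Ω → T),
        (∀ (r : Fin σn → Bool) (z : ZS) (w : T),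
          pr p (fun ω => (R ω = r ∧ Z ω = z) ∧ W ω = w)
            = pr p (fun ω => R ω = r ∧ Z ω = z) * pr p (fun ω => W ω = w)) →
        condMinEntropy p (fun ω => Enc (m, R ω)) Z
          ≥ minEntropy p (fun ω => Enc (m, R ω)) - ρ * n →
        ∀ (A : ZS → T → (Fin n → Bool)),
          pr p (fun ω => Dec (fun i => Bool.xor (Enc (m, R ω) i) (A (Z ω) (W ω) i))
              ∉ ({some m, none} : Set (Option (Fin k → Bool)))) ≤ δ

def bx {n : ℕ} (x a : Fin n → Bool) : Fin n → Bool := fun i => Bool.xor (x i) (a i)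

theorem bx_invol {n : ℕ} (x : Fin n → Bool) : Function.Involutive (bx x) := by
  intro a
  funext i
  simp [bx]

theorem bx_count {n : ℕ} (B : Finset (Fin n → Bool)) (x : Fin n → Bool) (c : ℝ) :
    ∑ a : Fin n → Bool, (if bx x a ∉ B then c else 0) = ((2 : ℝ) ^ n - B.card) * c := by
  have h := Equiv.sum_comp (bx_invol x).toPerm (fun y => if y ∉ B then c else 0)
  have h1 : ∑ a : Fin n → Bool, (if bx x a ∉ B then c else 0)
      = ∑ y : Fin n → Bool, (if y ∉ B then c else 0) := h
  rw [h1]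
  have h2 : ∀ y : Fin n → Bool, (if y ∉ B then c else 0) = c - (if y ∈ B then c else 0) := by
    intro y
    by_cases hy : y ∈ B <;> simp [hy]
  simp_rw [h2]
  rw [Finset.sum_sub_distrib]
  simp
  ring

theorem greedy {n : ℕ} {ι : Type} [Fintype ι] (q : ι → ℝ) (hq : ∀ i, 0 ≤ q i)
    (X : ι → Fin n → Bool) (B : Finset (Fin n → Bool)) (T : ℕ) :
    ∃ S : Fin T → Fin n → Bool,
      ∑ i, (if ∀ t, bx (X i) (S t) ∉ B then q i else 0)
        ≤ (1 - (B.card : ℝ) / 2 ^ n) ^ T * ∑ i, q i := by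
  have hcard : (B.card : ℝ) ≤ 2 ^ n := by
    have := Finset.card_le_univ B
    simp at this
    exact_mod_cast this
  have hd : 0 ≤ 1 - (B.card : ℝ) / 2 ^ n := by
    rw [sub_nonneg, div_le_one (by positivity)]
    exact hcard
  induction T with
  | zero => exact ⟨fun t => t.elim0, by simp⟩
  | succ T ih =>
    obtain ⟨S, hS⟩ := ih
    set M := ∑ i, (if ∀ t, bx (X i) (S t) ∉ B then q i else 0) with hM
    have key : ∑ a : Fin n → Bool, ∑ i,
        (if bx (X i) a ∉ B then (if ∀ t, bx (X i) (S t) ∉ B then q i else 0) else 0)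
        ≤ ∑ a : Fin n → Bool, (1 - (B.card : ℝ) / 2 ^ n) * M := by
      rw [Finset.sum_comm]
      simp_rw [bx_count]
      rw [← Finset.mul_sum, ← hM]
      simp
      apply le_of_eq
      field_simp
    obtain ⟨a, -, ha⟩ := Finset.exists_le_of_sum_le Finset.univ_nonempty key
    refine ⟨Fin.cons a S, ?_⟩
    calc _ = ∑ i, (if bx (X i) a ∉ B then
              (if ∀ t, bx (X i) (S t) ∉ B then q i else 0) else 0) := by
          apply Finset.sum_congr rfl
          intro i _
          rw [← ite_and]
          simp only [Fin.forall_fin_succ, Fin.cons_zero, Fin.cons_succ]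
      _ ≤ (1 - (B.card : ℝ) / 2 ^ n) * M := ha
      _ ≤ (1 - (B.card : ℝ) / 2 ^ n) * ((1 - (B.card : ℝ) / 2 ^ n) ^ T * ∑ i, q i) :=
          mul_le_mul_of_nonneg_left hS hd
      _ = _ := by ring

theorem pr_mono {Ω : Type} [Fintype Ω] (p : Ω → ℝ) (hp : ∀ ω, 0 ≤ p ω) (E F : Ω → Prop)
    (h : ∀ ω, E ω → F ω) : pr p E ≤ pr p F := by
  unfold pr
  apply Finset.sum_le_sum
  intro ω _
  by_cases hE : E ω
  · simp [hE, h ω hE]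
  · by_cases hF : F ω <;> simp [hE, hF, hp]

theorem attack {k σn n : ℕ} {ρ δ : ℝ}
    {Enc : (Fin k → Bool) × (Fin σn → Bool) → (Fin n → Bool)}
    {Dec : (Fin n → Bool) → Option (Fin k → Bool)}
    (h : IsStrongAMDBin k σn n Enc Dec ρ δ) (m : Fin k → Bool)
    (ZS : Type) [Fintype ZS] (hZ : (Fintype.card ZS : ℝ) ≤ 2 ^ (ρ * n))
    (Z : (Fin σn → Bool) → ZS) (A : ZS → Fin n → Bool) :
    pr (fun _ : Fin σn → Bool => 1 / (2 : ℝ) ^ σn)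
      (fun r => Dec (bx (Enc (m, r)) (A (Z r)))
        ∉ ({some m, none} : Set (Option (Fin k → Bool)))) ≤ δ := by
  have hp : ∀ r : Fin σn → Bool, 0 ≤ (fun _ : Fin σn → Bool => 1 / (2 : ℝ) ^ σn) r :=
    fun r => by positivity
  refine h m (Fin σn → Bool) (fun _ => 1 / (2 : ℝ) ^ σn) hp ?_ id ?_ ZS Z Unit (fun _ => ())
    ?_ ?_ (fun z _ => A z)
  · simp
  · intro r
    simp [pr]
  · intro r z w
    have : pr (fun _ : Fin σn → Bool => 1 / (2 : ℝ) ^ σn) (fun _ => () = w) = 1 := by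
      simp [pr]
    rw [this]
    simp
  · set p : (Fin σn → Bool) → ℝ := fun _ => 1 / (2 : ℝ) ^ σn with hpdef
    unfold condMinEntropy minEntropy
    simp only [id]
    set X : (Fin σn → Bool) → Fin n → Bool := fun r => Enc (m, r) with hX
    change - Real.logb 2 (∑ z, ⨆ x, pr p (fun ω => X ω = x ∧ Z ω = z)) ≥
      - Real.logb 2 (⨆ x, pr p (fun ω => X ω = x)) - ρ * n
    have bdd : ∀ f : (Fin n → Bool) → ℝ, BddAbove (Set.range f) :=
      fun f => (Set.finite_range f).bddAbove
    set s := ⨆ x, pr p (fun ω => X ω = x) with hs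
    have h1 : ∀ z, (⨆ x, pr p (fun ω => X ω = x ∧ Z ω = z)) ≤ s := by
      intro z
      apply ciSup_mono (bdd _)
      intro x
      exact pr_mono p hp _ _ (fun ω h => h.1)
    have hnn : ∀ E, 0 ≤ pr p E := by
      intro E
      exact Finset.sum_nonneg (fun ω _ => by split_ifs; exacts [hp ω, le_rfl])
    let r0 : Fin σn → Bool := fun _ => false
    have hpos : 0 < ∑ z, ⨆ x, pr p (fun ω => X ω = x ∧ Z ω = z) := by
      have a1 : 0 < pr p (fun ω => X ω = X r0 ∧ Z ω = Z r0) := by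
        unfold pr
        apply Finset.sum_pos'
        · intro ω _
          split_ifs
          exacts [hp ω, le_rfl]
        · refine ⟨r0, Finset.mem_univ _, ?_⟩
          simp [hpdef]
      apply Finset.sum_pos'
      · intro z _
        exact le_ciSup_of_le (bdd _) (X r0) (hnn _)
      · exact ⟨Z r0, Finset.mem_univ _, lt_of_lt_of_le a1
          (le_ciSup (f := fun x => pr p (fun ω => X ω = x ∧ Z ω = Z r0)) (bdd _) (X r0))⟩
    have hs0 : 0 ≤ s := le_ciSup_of_le (bdd _) (X r0) (hnn _)
    have h2 : ∑ z, (⨆ x, pr p (fun ω => X ω = x ∧ Z ω = z)) ≤ 2 ^ (ρ * n) * s := by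
      calc _ ≤ ∑ z : ZS, s := Finset.sum_le_sum (fun z _ => h1 z)
        _ = (Fintype.card ZS : ℝ) * s := by simp
        _ ≤ _ := mul_le_mul_of_nonneg_right hZ hs0
    have hspos : 0 < s := by
      rcases hs0.lt_or_eq with h | h
      · exact h
      · rw [← h] at h2
        simp at h2
        linarith
    have h3 := Real.logb_le_logb_of_le (b := 2) (by norm_num) hpos h2
    rw [Real.logb_mul (by positivity) hspos.ne',
      Real.logb_rpow (by norm_num) (by norm_num)] at h3
    linarith


/-- for `k ≥ 1` and `ρ ∈ (0,1)` with `2ρ + k/n ≥ 1`, no binary coding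
scheme is a strong `(ρ, 3/16)`-AMD code. -/
theorem stmt14 (k σn n : ℕ) (hk : 1 ≤ k)
    (ρ : ℝ) (hρ0 : 0 < ρ) (hρ1 : ρ < 1)
    (hrate : 2 * ρ + (k : ℝ) / (n : ℝ) ≥ 1)
    (Enc : (Fin k → Bool) × (Fin σn → Bool) → (Fin n → Bool))
    (Dec : (Fin n → Bool) → Option (Fin k → Bool))
    (hcode : ∀ m r, Dec (Enc (m, r)) = some m) :
    ¬ IsStrongAMDBin k σn n Enc Dec ρ (3 / 16) := by
  intro hamd
  have hne : ∀ m : Fin k → Bool, ∃ m' : Fin k → Bool, m' ≠ m := by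
    intro m
    refine ⟨fun i => !(m i), fun h => ?_⟩
    have := congrFun h ⟨0, hk⟩
    simp at this
  have hn : 0 < n := by
    rcases Nat.eq_zero_or_pos n with h | h
    · subst h
      obtain ⟨m', hm'⟩ := hne (fun _ => false)
      have e : Enc (m', fun _ => false) = Enc (fun _ => false, fun _ => false) :=
        Subsingleton.elim _ _
      have a := hcode m' (fun _ => false)
      rw [e, hcode] at a
      exact absurd (Option.some.inj a).symm hm'
    · exact h
  have hnR : (0 : ℝ) < n := by exact_mod_cast hn
  set C : (Fin k → Bool) → Finset (Fin n → Bool) :=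
    fun m => Finset.univ.image (fun r => Enc (m, r)) with hC
  by_cases hcase : ∃ m, ((C m).card : ℝ) ≤ 2 ^ (ρ * n)
  · obtain ⟨m, hm⟩ := hcase
    obtain ⟨m', hm'⟩ := hne m
    have := attack hamd m {x // x ∈ C m} (by simpa using hm)
      (fun r => ⟨Enc (m, r), by simp [hC]⟩) (fun z => bx z.1 (Enc (m', fun _ => false)))
    have e : ∀ r, bx (Enc (m, r)) (bx (Enc (m, r)) (Enc (m', fun _ => false)))
        = Enc (m', fun _ => false) := fun r => bx_invol _ _
    simp only [e, hcode] at this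
    simp [pr, hm'] at this
    norm_num at this
  · push Not at hcase
    set m : Fin k → Bool := fun _ => false with hm
    set B : Finset (Fin n → Bool) := Finset.univ.filter
      (fun y => Dec y ∉ ({some m, none} : Set (Option (Fin k → Bool)))) with hB
    set L : ℝ := 2 ^ (ρ * n) with hL
    have hL1 : 1 ≤ L := Real.one_le_rpow (by norm_num) (by positivity)
    set T := ⌊L⌋₊ with hT
    have hT1 : 1 ≤ T := Nat.le_floor (by simpa using hL1)
    have hTle : (T : ℝ) ≤ L := Nat.floor_le (by linarith)
    have hTge : L / 2 ≤ T := by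
      have a := Nat.lt_floor_add_one L
      have b : (1 : ℝ) ≤ T := by exact_mod_cast hT1
      rw [← hT] at a
      linarith
    have hdecC : ∀ m' y, y ∈ C m' → Dec y = some m' := by
      intro m' y hy
      simp only [hC, Finset.mem_image] at hy
      obtain ⟨r, -, rfl⟩ := hy
      exact hcode _ _
    have hBcard : ((2 : ℝ) ^ k - 1) * L ≤ B.card := by
      have hsub : (Finset.univ.erase m).biUnion C ⊆ B := by
        intro y hy
        simp only [Finset.mem_biUnion, Finset.mem_erase] at hy
        obtain ⟨m', hm', hy⟩ := hy
        simp [hB, hdecC m' y hy, hm'.1]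
      have hdisj : Set.PairwiseDisjoint (↑(Finset.univ.erase m) : Set (Fin k → Bool)) C := by
        intro a _ b _ hab
        rw [Function.onFun, Finset.disjoint_left]
        intro y ha hb
        have := (hdecC a y ha).symm.trans (hdecC b y hb)
        exact hab (Option.some.inj this)
      have h1 := Finset.card_le_card hsub
      rw [Finset.card_biUnion hdisj] at h1
      calc ((2 : ℝ) ^ k - 1) * L = ∑ m' ∈ Finset.univ.erase m, L := by
            rw [Finset.sum_const, Finset.card_erase_of_mem (Finset.mem_univ _), nsmul_eq_mul,
              Nat.cast_sub (by simp [Nat.one_le_two_pow])]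
            simp
        _ ≤ ∑ m' ∈ Finset.univ.erase m, ((C m').card : ℝ) :=
            Finset.sum_le_sum (fun m' _ => (hcase m').le)
        _ ≤ B.card := by exact_mod_cast h1
    have hLL : (2 : ℝ) ^ n ≤ L * L * 2 ^ k := by
      have e : L * L * 2 ^ k = (2 : ℝ) ^ (ρ * n + ρ * n + k) := by
        rw [Real.rpow_add (by norm_num), Real.rpow_add (by norm_num), Real.rpow_natCast]
      rw [e, ← Real.rpow_natCast]
      apply Real.rpow_le_rpow_of_exponent_le (by norm_num)
      have := mul_le_mul_of_nonneg_right hrate hnR.le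
      rw [add_mul, div_mul_cancel₀ _ hnR.ne'] at this
      linarith
    set d : ℝ := (B.card : ℝ) / 2 ^ n with hd
    have hd0 : 0 ≤ d := by positivity
    have hd1 : d ≤ 1 := by
      rw [hd, div_le_one (by positivity)]
      have := Finset.card_le_univ B
      simp at this
      exact_mod_cast this
    have hTd : 1 / 4 ≤ T * d := by
      have h2k : (2 : ℝ) ≤ 2 ^ k := by
        calc (2 : ℝ) = 2 ^ 1 := by norm_num
          _ ≤ 2 ^ k := pow_le_pow_right₀ (by norm_num) hk
      have h1 : (2 : ℝ) ^ k / 2 * L ≤ B.card :=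
        le_trans (mul_le_mul_of_nonneg_right (by linarith) (by linarith)) hBcard
      have h2 : L / 2 * ((2 : ℝ) ^ k / 2 * L) ≤ T * B.card :=
        mul_le_mul hTge h1 (by positivity) (by positivity)
      rw [hd, ← mul_div_assoc, le_div_iff₀ (by positivity)]
      nlinarith
    have hpow : (1 - d) ^ T ≤ 4 / 5 := by
      have h1 : 5 / 4 ≤ (1 + d) ^ T := by
        have := one_add_mul_le_pow (a := d) (by linarith) T
        linarith
      have h2 : (1 - d) ^ T * (1 + d) ^ T ≤ 1 := by
        rw [← mul_pow]
        apply pow_le_one₀ <;> nlinarith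
      have h3 : 0 ≤ (1 - d) ^ T := pow_nonneg (by linarith) _
      nlinarith
    set p : (Fin σn → Bool) → ℝ := fun _ => 1 / (2 : ℝ) ^ σn with hp
    have hsum : ∑ r, p r = 1 := by simp [hp]
    obtain ⟨S, hS⟩ := greedy p (fun r => by positivity) (fun r => Enc (m, r)) B T
    rw [hsum, mul_one] at hS
    have : Nonempty (Fin T) := ⟨⟨0, hT1⟩⟩
    have hex : ∀ r, ∃ t, (∃ t', bx (Enc (m, r)) (S t') ∈ B) → bx (Enc (m, r)) (S t) ∈ B := by
      intro r
      by_cases h : ∃ t', bx (Enc (m, r)) (S t') ∈ B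
      · obtain ⟨t, ht⟩ := h
        exact ⟨t, fun _ => ht⟩
      · exact ⟨Classical.arbitrary _, fun h' => absurd h' h⟩
    choose Z hZ using hex
    have hatt := attack hamd m (Fin T) (by simpa using hTle) Z S
    have hlow : 1 ≤ pr p (fun r => Dec (bx (Enc (m, r)) (S (Z r)))
        ∉ ({some m, none} : Set (Option (Fin k → Bool))))
        + ∑ r, (if ∀ t, bx (Enc (m, r)) (S t) ∉ B then p r else 0) := by
      rw [← hsum]
      unfold pr
      rw [← Finset.sum_add_distrib]
      apply Finset.sum_le_sum
      intro r _
      have hpr : 0 ≤ p r := by positivity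
      by_cases h : ∀ t, bx (Enc (m, r)) (S t) ∉ B
      · rw [if_pos h]
        split_ifs <;> linarith
      · rw [if_neg h]
        push Not at h
        have := hZ r h
        rw [hB, Finset.mem_filter] at this
        rw [if_pos this.2]
        linarith
    linarith
end

section
/- Let k ≥ 1 and let ρ ∈ (0,1) satisfy ρ + k/n ≥ 1 or ρ ≥ k/n. Then no deterministic coding scheme Enc : {0,1}^k → {0,1}^n, Dec : {0,1}^n → {0,1}^k ∪ {⊥} with Dec(Enc(m)) = m for all m is a weak (ρ, 3/8)-AMD code: there exist a finite set 𝒵, a random variable Z on 𝒵 jointly distributed with the uniform message M on {0,1}^k (possibly depending on additional randomness independent of M) with H̃∞(Enc(M) | Z) ≥ H∞(Enc(M)) − ρ·n, and a randomized function 𝖠 : 𝒵 → {0,1}^n whose internal randomness is independent of M, such that Pr[Dec(Enc(M) ⊕ 𝖠(Z)) ∉ {M, ⊥}] > 3/8, where ⊕ denotes bitwise XOR. -/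
open scoped Classical BigOperators

/-- A deterministic binary coding scheme `(Enc, Dec)` is a weak `(ρ, δ)`-AMD code: for
every probability space, every uniform message `M`, every leakage `Z` (jointly
distributed with `M`, possibly depending on additional randomness independent of `M`)
satisfying `H̃∞(Enc(M) | Z) ≥ H∞(Enc(M)) − ρ·n`, and every randomized adversary `A`
whose internal random seed `W` is independent of `(M, Z)`,
`Pr[Dec(Enc(M) ⊕ A(Z)) ∉ {M, ⊥}] ≤ δ`, where `⊕` is bitwise XOR. -/
def IsWeakAMDBin (k n : ℕ)
    (Enc : (Fin k → Bool) → (Fin n → Bool))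
    (Dec : (Fin n → Bool) → Option (Fin k → Bool)) (ρ δ : ℝ) : Prop :=
  ∀ (Ω : Type) [Fintype Ω] (p : Ω → ℝ),
    (∀ ω, 0 ≤ p ω) → (∑ ω : Ω, p ω) = 1 →
    ∀ (M : Ω → (Fin k → Bool)),
      (∀ m : Fin k → Bool, pr p (fun ω => M ω = m) = 1 / (2 : ℝ) ^ k) →
      ∀ (ZS : Type) [Fintype ZS] (Z : Ω → ZS) (T : Type) [Fintype T] (W : Ω → T),
        (∀ (m : Fin k → Bool) (z : ZS) (w : T),
          pr p (fun ω => (M ω = m ∧ Z ω = z) ∧ W ω = w)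
            = pr p (fun ω => M ω = m ∧ Z ω = z) * pr p (fun ω => W ω = w)) →
        condMinEntropy p (fun ω => Enc (M ω)) Z
          ≥ minEntropy p (fun ω => Enc (M ω)) - ρ * n →
        ∀ (A : ZS → T → (Fin n → Bool)),
          pr p (fun ω => Dec (fun i => Bool.xor (Enc (M ω) i) (A (Z ω) (W ω) i))
              ∉ ({some (M ω), none} : Set (Option (Fin k → Bool)))) ≤ δ

/-- Offset `a` turns the codeword of `m` into the codeword of another message. -/
def Hit {k n : ℕ} (Enc : (Fin k → Bool) → (Fin n → Bool)) (a : Fin n → Bool)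
    (m : Fin k → Bool) : Prop :=
  ∃ m', m' ≠ m ∧ Enc m' = fun i => Bool.xor (Enc m i) (a i)

lemma generic_attack (k n : ℕ) (ρ : ℝ)
    (Enc : (Fin k → Bool) → (Fin n → Bool))
    (Dec : (Fin n → Bool) → Option (Fin k → Bool))
    (hcode : ∀ m, Dec (Enc m) = some m)
    (ZS : Type) [Fintype ZS] (hL : (Fintype.card ZS : ℝ) ≤ (2 : ℝ) ^ (ρ * n))
    (Z : (Fin k → Bool) → ZS) (A : ZS → (Fin n → Bool))
    (hA : 3 / 8 * (2 : ℝ) ^ k <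
      ((Finset.univ.filter (fun m => Hit Enc (A (Z m)) m)).card : ℝ)) :
    ¬ IsWeakAMDBin k n Enc Dec ρ (3 / 8) := by
  intro h
  have hinj : Function.Injective Enc := by
    intro a b hab
    have h1 := hcode a
    rw [hab, hcode b] at h1
    exact (Option.some.inj h1).symm
  have hN : (0 : ℝ) < 2 ^ k := by positivity
  set p : (Fin k → Bool) → ℝ := fun _ => 1 / (2 : ℝ) ^ k with hp
  have hp0 : ∀ m, 0 ≤ p m := fun m => by simp only [hp]; positivity
  have hpr : ∀ (E : (Fin k → Bool) → Prop) [DecidablePred E],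
      pr p E = ((Finset.univ.filter E).card : ℝ) * (1 / (2 : ℝ) ^ k) := by
    intro E _
    unfold pr
    rw [← nsmul_eq_mul, ← Finset.sum_const, Finset.sum_filter]
    apply Finset.sum_congr rfl
    intro ω _
    by_cases hE : E ω <;> simp [hE, hp]
  have hpr0 : ∀ E, 0 ≤ pr p E := fun E => by rw [hpr]; positivity
  have hM : ∀ m : Fin k → Bool, pr p (fun ω => id ω = m) = 1 / (2 : ℝ) ^ k := by
    intro m
    rw [hpr]
    have : (Finset.univ.filter (fun ω : Fin k → Bool => id ω = m)) = {m} := by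
      ext; simp
    rw [this]; simp
  have hsum : ∑ ω, p ω = 1 := by
    simp [hp]
  have hone : ∀ x (E : (Fin k → Bool) → Prop), pr p (fun ω => Enc ω = x ∧ E ω) ≤ 1 / (2 : ℝ) ^ k := by
    intro x E
    rw [hpr]
    have : (Finset.univ.filter (fun ω : Fin k → Bool => Enc ω = x ∧ E ω)).card ≤ 1 := by
      rw [Finset.card_le_one]
      intro a ha b hb
      simp only [Finset.mem_filter, Finset.mem_univ, true_and] at ha hb
      exact hinj (ha.1.trans hb.1.symm)
    have h2 : ((Finset.univ.filter (fun ω : Fin k → Bool => Enc ω = x ∧ E ω)).card : ℝ) ≤ 1 := by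
      exact_mod_cast this
    calc _ ≤ 1 * (1 / (2 : ℝ) ^ k) := by gcongr
      _ = _ := one_mul _
  have hpoint : ∀ m, pr p (fun ω => Enc ω = Enc m ∧ Z ω = Z m) = 1 / (2 : ℝ) ^ k := by
    intro m
    rw [hpr]
    have : (Finset.univ.filter (fun ω : Fin k → Bool => Enc ω = Enc m ∧ Z ω = Z m)) = {m} := by
      ext ω
      simp only [Finset.mem_filter, Finset.mem_univ, true_and, Finset.mem_singleton]
      constructor
      · rintro ⟨h1, _⟩; exact hinj h1
      · rintro rfl; simp
    rw [this]; simp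
  have hpoint1 : ∀ m, pr p (fun ω => Enc ω = Enc m) = 1 / (2 : ℝ) ^ k := by
    intro m
    rw [hpr]
    have : (Finset.univ.filter (fun ω : Fin k → Bool => Enc ω = Enc m)) = {m} := by
      ext ω
      simp only [Finset.mem_filter, Finset.mem_univ, true_and, Finset.mem_singleton]
      exact hinj.eq_iff
    rw [this]; simp
  let m0 : Fin k → Bool := fun _ => false
  have hent : condMinEntropy p (fun ω => Enc (id ω)) Z
      ≥ minEntropy p (fun ω => Enc (id ω)) - ρ * n := by
    unfold condMinEntropy minEntropy
    simp only [id]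
    set S := ∑ z, ⨆ x, pr p (fun ω => Enc ω = x ∧ Z ω = z) with hS
    set R := ⨆ x, pr p (fun ω => Enc ω = x) with hR
    have hRge : 1 / (2 : ℝ) ^ k ≤ R := by
      rw [← hpoint1 m0]
      exact le_ciSup (f := fun x => pr p (fun ω => Enc ω = x)) (Set.finite_range _).bddAbove (Enc m0)
    have hSle : S ≤ (2 : ℝ) ^ (ρ * n) * (1 / (2 : ℝ) ^ k) := by
      calc S ≤ ∑ z : ZS, 1 / (2 : ℝ) ^ k :=
            Finset.sum_le_sum fun z _ => ciSup_le fun x => hone x _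
        _ = (Fintype.card ZS : ℝ) * (1 / (2 : ℝ) ^ k) := by simp
        _ ≤ _ := by gcongr
    have hSpos : 0 < S := by
      have h1 : (1 : ℝ) / 2 ^ k ≤ ⨆ x, pr p (fun ω => Enc ω = x ∧ Z ω = Z m0) := by
        rw [← hpoint m0]
        exact le_ciSup (f := fun x => pr p (fun ω => Enc ω = x ∧ Z ω = Z m0))
          (Set.finite_range _).bddAbove (Enc m0)
      have h2 : (⨆ x, pr p (fun ω => Enc ω = x ∧ Z ω = Z m0)) ≤ S :=
        Finset.single_le_sum (f := fun z => ⨆ x, pr p (fun ω => Enc ω = x ∧ Z ω = z))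
          (fun z _ => Real.iSup_nonneg fun x => hpr0 _) (Finset.mem_univ (Z m0))
      have : (0 : ℝ) < 1 / 2 ^ k := by positivity
      linarith
    have hk0 : (0 : ℝ) < 1 / 2 ^ k := by positivity
    have hSR : S ≤ (2 : ℝ) ^ (ρ * n) * R := hSle.trans (by gcongr)
    have h3 : Real.logb 2 S ≤ Real.logb 2 ((2 : ℝ) ^ (ρ * n) * R) :=
      Real.logb_le_logb_of_le (by norm_num) hSpos hSR
    rw [Real.logb_mul (by positivity) (by linarith), Real.logb_rpow (by norm_num) (by norm_num)] at h3
    linarith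
  have hfin := h (Fin k → Bool) p hp0 hsum id hM ZS Z Unit (fun _ => ()) (by
    intro m z w
    have : pr p (fun _ => () = w) = 1 := by
      unfold pr; simp [hsum]
    rw [this]
    simp) hent (fun z _ => A z)
  rw [hpr] at hfin
  have hsub : (Finset.univ.filter (fun m => Hit Enc (A (Z m)) m)).card ≤
      (Finset.univ.filter (fun ω : Fin k → Bool =>
        Dec (fun i => Bool.xor (Enc (id ω) i) (A (Z ω) i))
              ∉ ({some (id ω), none} : Set (Option (Fin k → Bool))))).card := by
    apply Finset.card_le_card
    intro m hm
    simp only [Finset.mem_filter, Finset.mem_univ, true_and] at hm ⊢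
    obtain ⟨m', hne, he⟩ := hm
    simp only [id]
    rw [← he, hcode]
    simp [hne]
  have hsub' : ((Finset.univ.filter (fun m => Hit Enc (A (Z m)) m)).card : ℝ) ≤ _ :=
    Nat.cast_le.mpr hsub
  rw [mul_one_div, div_le_iff₀ hN] at hfin
  linarith

lemma step_cover (k n : ℕ) (Enc : (Fin k → Bool) → (Fin n → Bool))
    (hinj : Function.Injective Enc) (hn : 1 ≤ n) (S : Finset (Fin k → Bool)) :
    ∃ a, (2 ^ k - 1) * S.card ≤ (2 ^ n - 1) * (S.filter (Hit Enc a)).card := by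
  by_contra! hcon
  set U : Finset (Fin n → Bool) := Finset.univ.erase (fun _ => false) with hU
  have hUc : U.card = 2 ^ n - 1 := by
    simp [hU, Finset.card_erase_of_mem]
  have hUne : U.Nonempty := by
    rw [← Finset.card_pos, hUc]
    have : 2 ^ 1 ≤ 2 ^ n := Nat.pow_le_pow_right (by norm_num) hn
    omega
  have h1 : ∑ a ∈ U, (2 ^ n - 1) * (S.filter (Hit Enc a)).card < ∑ a ∈ U, (2 ^ k - 1) * S.card :=
    Finset.sum_lt_sum_of_nonempty hUne fun a _ => hcon a
  rw [← Finset.mul_sum, Finset.sum_const, hUc, smul_eq_mul] at h1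
  have h2 := Nat.lt_of_mul_lt_mul_left h1
  have h3 : ∑ a ∈ U, (S.filter (Hit Enc a)).card = ∑ m ∈ S, (U.filter (fun a => Hit Enc a m)).card :=
    Finset.sum_card_bipartiteAbove_eq_sum_card_bipartiteBelow (fun a m => Hit Enc a m)
  have h4 : ∑ m ∈ S, (2 ^ k - 1) ≤ ∑ m ∈ S, (U.filter (fun a => Hit Enc a m)).card := by
    apply Finset.sum_le_sum
    intro m _
    have hc : ((Finset.univ : Finset (Fin k → Bool)).erase m).card = 2 ^ k - 1 := by
      simp [Finset.card_erase_of_mem]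
    rw [← hc]
    apply Finset.card_le_card_of_injOn (fun m' i => Bool.xor (Enc m i) (Enc m' i))
    · intro m' hm'
      have hne : m' ≠ m := by simpa using hm'
      simp only [hU, Finset.coe_filter, Set.mem_ofPred_eq, Finset.mem_erase, Finset.mem_univ, and_true]
      refine ⟨?_, m', hne, ?_⟩
      · intro he
        apply hne
        apply hinj
        funext i
        have := congrFun he i
        revert this
        cases Enc m i <;> cases Enc m' i <;> simp
      · funext i
        simp
    · intro x _ y _ hxy
      apply hinj
      funext i
      have := congrFun hxy i
      simpa using this
  rw [Finset.sum_const, smul_eq_mul, ← h3] at h4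
  rw [mul_comm] at h2
  omega

lemma cover (k n : ℕ) (Enc : (Fin k → Bool) → (Fin n → Bool))
    (hinj : Function.Injective Enc) (hn : 1 ≤ n) (hkn : k ≤ n) (L : ℕ) :
    ∃ A : Fin L → (Fin n → Bool),
      ((Finset.univ.filter (fun m => ∀ i, ¬ Hit Enc (A i) m)).card : ℝ) ≤
        2 ^ k * (1 - ((2 : ℝ) ^ k - 1) / (2 ^ n - 1)) ^ L := by
  have hQ : (0 : ℝ) < 2 ^ n - 1 := by
    have : (1 : ℝ) < 2 ^ n := one_lt_pow₀ (by norm_num) (by omega)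
    linarith
  have hp1 : ((2 : ℝ) ^ k - 1) / (2 ^ n - 1) ≤ 1 := by
    rw [div_le_one hQ]
    have : (2 : ℝ) ^ k ≤ 2 ^ n := pow_le_pow_right₀ (by norm_num) hkn
    linarith
  induction L with
  | zero => exact ⟨fun i => i.elim0, by simp⟩
  | succ L ih =>
    obtain ⟨A, hA⟩ := ih
    set S := Finset.univ.filter (fun m => ∀ i, ¬ Hit Enc (A i) m) with hS
    obtain ⟨a, ha⟩ := step_cover k n Enc hinj hn S
    refine ⟨Fin.cons a A, ?_⟩
    have he : (Finset.univ.filter (fun m => ∀ i, ¬ Hit Enc ((Fin.cons a A : Fin (L+1) → (Fin n → Bool)) i) m))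
        = S.filter (fun m => ¬ Hit Enc a m) := by
      ext m
      simp [hS, Fin.forall_fin_succ, and_comm]
    rw [he]
    have hc := Finset.card_filter_add_card_filter_not (s := S) (Hit Enc a)
    have hcR : ((S.filter (Hit Enc a)).card : ℝ) + (S.filter (fun m => ¬ Hit Enc a m)).card = S.card := by
      exact_mod_cast hc
    have haR : ((2 : ℝ) ^ k - 1) * S.card ≤ (2 ^ n - 1) * (S.filter (Hit Enc a)).card := by
      have h := (Nat.cast_le (α := ℝ)).mpr ha
      rw [Nat.cast_mul, Nat.cast_mul, Nat.cast_sub Nat.one_le_two_pow,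
        Nat.cast_sub Nat.one_le_two_pow] at h
      push_cast at h
      exact h
    have h5 : ((2 : ℝ) ^ k - 1) / (2 ^ n - 1) * S.card ≤ (S.filter (Hit Enc a)).card := by
      rw [div_mul_eq_mul_div, div_le_iff₀ hQ]
      linarith
    have h6 := mul_le_mul_of_nonneg_right hA (sub_nonneg.mpr hp1)
    rw [pow_succ]
    linarith

/-- for `k ≥ 1` and `ρ ∈ (0,1)` with `ρ + k/n ≥ 1` or `ρ ≥ k/n`, no
deterministic binary coding scheme is a weak `(ρ, 3/8)`-AMD code. -/
theorem stmt15 (k n : ℕ) (hk : 1 ≤ k)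
    (ρ : ℝ) (hρ0 : 0 < ρ) (hρ1 : ρ < 1)
    (hrate : ρ + (k : ℝ) / (n : ℝ) ≥ 1 ∨ ρ ≥ (k : ℝ) / (n : ℝ))
    (Enc : (Fin k → Bool) → (Fin n → Bool))
    (Dec : (Fin n → Bool) → Option (Fin k → Bool))
    (hcode : ∀ m, Dec (Enc m) = some m) :
    ¬ IsWeakAMDBin k n Enc Dec ρ (3 / 8) := by
  have hinj : Function.Injective Enc := by
    intro a b hab
    have h1 := hcode a
    rw [hab, hcode b] at h1
    exact (Option.some.inj h1).symm
  have hkn : k ≤ n := by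
    have h := Fintype.card_le_of_injective Enc hinj
    simp only [Fintype.card_fun, Fintype.card_bool, Fintype.card_fin] at h
    exact (Nat.pow_le_pow_iff_right (by norm_num)).mp h
  have hn : 1 ≤ n := hk.trans hkn
  have hnR : (0 : ℝ) < n := by exact_mod_cast hn
  have hN2 : (2 : ℝ) ≤ 2 ^ k := by
    calc (2 : ℝ) = 2 ^ 1 := by norm_num
      _ ≤ 2 ^ k := pow_le_pow_right₀ (by norm_num) hk
  rcases hrate with hr | hr
  · have hr' : (n : ℝ) - k ≤ ρ * n := by
      have h1 : (1 - ρ) ≤ (k : ℝ) / n := by linarith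
      rw [le_div_iff₀ hnR] at h1
      linarith
    set L := 2 ^ (n - k) with hLdef
    have hLpos : 0 < L := by positivity
    obtain ⟨A, hA⟩ := cover k n Enc hinj hn hkn L
    let Z : (Fin k → Bool) → Fin L := fun m =>
      if h : ∃ i, Hit Enc (A i) m then h.choose else ⟨0, hLpos⟩
    refine generic_attack k n ρ Enc Dec hcode (Fin L) ?_ Z A ?_
    · rw [Fintype.card_fin, hLdef]
      push_cast
      rw [← Real.rpow_natCast, Nat.cast_sub hkn]
      exact Real.rpow_le_rpow_of_exponent_le (by norm_num) hr'
    · have he : Finset.univ.filter (fun m => Hit Enc (A (Z m)) m) =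
          Finset.univ.filter (fun m => ¬ ∀ i, ¬ Hit Enc (A i) m) := by
        ext m
        simp only [Finset.mem_filter, Finset.mem_univ, true_and, not_forall, not_not]
        constructor
        · intro h; exact ⟨_, h⟩
        · intro h
          simp only [Z, dif_pos h]
          exact h.choose_spec
      rw [he]
      have hc := Finset.card_filter_add_card_filter_not
        (s := (Finset.univ : Finset (Fin k → Bool))) (fun m => ∀ i, ¬ Hit Enc (A i) m)
      have hcR : ((Finset.univ.filter (fun m => ∀ i, ¬ Hit Enc (A i) m)).card : ℝ)
          + ((Finset.univ.filter (fun m => ¬ ∀ i, ¬ Hit Enc (A i) m)).card : ℝ) = 2 ^ k := by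
        have h := congrArg (Nat.cast (R := ℝ)) hc
        simpa only [Nat.cast_add, Finset.card_univ, Fintype.card_fun, Fintype.card_bool,
          Fintype.card_fin, Nat.cast_pow, Nat.cast_ofNat] using h
      set q := ((2 : ℝ) ^ k - 1) / (2 ^ n - 1) with hq
      have hQ : (0 : ℝ) < 2 ^ n - 1 := by
        have : (1 : ℝ) < 2 ^ n := one_lt_pow₀ (by norm_num) (by omega)
        linarith
      have hle : (2 : ℝ) ^ k ≤ 2 ^ n := pow_le_pow_right₀ (by norm_num) hkn
      have hq1 : q ≤ 1 := by
        rw [hq, div_le_one hQ]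
        linarith
      have hLR : (L : ℝ) * 2 ^ k = 2 ^ n := by
        rw [hLdef]; push_cast
        rw [← pow_add, Nat.sub_add_cancel hkn]
      have hLR0 : (0 : ℝ) < L := by exact_mod_cast hLpos
      have hqL : 1 / 2 ≤ q * L := by
        rw [hq, div_mul_eq_mul_div, le_div_iff₀ hQ]
        nlinarith
      have hb : (1 - q) ^ L ≤ Real.exp (-(1 / 2)) := by
        calc (1 - q) ^ L ≤ (Real.exp (-q)) ^ L := by
              apply pow_le_pow_left₀ (by linarith)
              have := Real.add_one_le_exp (-q)
              linarith
          _ = Real.exp (-(q * L)) := by rw [← Real.exp_nat_mul]; ring_nf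
          _ ≤ _ := Real.exp_le_exp.mpr (by linarith)
      have hexp : Real.exp (-(1 / 2)) < 5 / 8 := by
        rw [Real.exp_neg, inv_lt_comm₀ (Real.exp_pos _) (by norm_num)]
        have := Real.quadratic_le_exp_of_nonneg (x := 1 / 2) (by norm_num)
        norm_num at this ⊢
        linarith
      have h7 : (2 : ℝ) ^ k * (1 - q) ^ L < 2 ^ k * (5 / 8) := by
        apply mul_lt_mul_of_pos_left _ (by positivity)
        linarith
      linarith
  · have hr' : (k : ℝ) ≤ ρ * n := by
      rw [ge_iff_le, div_le_iff₀ hnR] at hr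
      exact hr
    let f : (Fin k → Bool) → (Fin k → Bool) := fun m i => !(m i)
    refine generic_attack k n ρ Enc Dec hcode (Fin k → Bool) ?_ id
      (fun m i => Bool.xor (Enc m i) (Enc (f m) i)) ?_
    · simp only [Fintype.card_fun, Fintype.card_bool, Fintype.card_fin]
      push_cast
      rw [← Real.rpow_natCast]
      exact Real.rpow_le_rpow_of_exponent_le (by norm_num) hr'
    · have : Finset.univ.filter (fun m : Fin k → Bool =>
          Hit Enc ((fun m i => Bool.xor (Enc m i) (Enc (f m) i)) (id m)) m) = Finset.univ := by
        rw [Finset.filter_eq_self]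
        intro m _
        refine ⟨f m, ?_, ?_⟩
        · intro h
          have := congrFun h ⟨0, hk⟩
          simp [f] at this
        · funext i; simp
      rw [this]
      simp only [Finset.card_univ, Fintype.card_fun, Fintype.card_bool, Fintype.card_fin]
      push_cast
      linarith
end
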